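/- Let f : bD → ℂ be the restriction to bD of a continuously differentiable function on ℂ². Then the function F : D → ℂ defined by F(z) = ∫_{bD} f(w)·Δ(w,z)^{−2} dH³(w) is given by an absolutely convergent integral for every z ∈ D, and F extends to a continuous function on the closure of D; that is, there exists a continuous function G on the closure of D with G(z) = F(z) for all z ∈ D. -/

import Mathlib

open MeasureTheory Complex

noncomputable section

/-- `ℂ²` with the Euclidean metric. -/
abbrev C2 := EuclideanSpace ℂ (Fin 2)

instance : MeasurableSpace C2 := borel _
instance : BorelSpace C2 := ⟨rfl⟩

/-- The defining function `ρ(z) = |z₂|² + (Re z₁)² + (Im z₁)⁴ − 1`. -/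
def rho (z : C2) : ℝ := ‖z 1‖ ^ 2 + (z 0).re ^ 2 + (z 0).im ^ 4 - 1

/-- The boundary `bD = {ρ = 0}`. -/
def bD : Set C2 := {z | rho z = 0}

/-- The Cauchy–Leray denominator
`Δ(w,z) = (u₁ − 2i v₁³)(w₁ − z₁) + conj(w₂)(w₂ − z₂)`. -/
def Delta (w z : C2) : ℂ :=
  (((w 0).re : ℂ) - 2 * I * ((w 0).im : ℂ) ^ 3) * (w 0 - z 0)
    + (starRingEnd ℂ) (w 1) * (w 1 - z 1)
/-- The domain `D = {ρ < 0}`. -/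
def D : Set C2 := {z | rho z < 0}

/-!
Along `bD` the differential of `Δ(·, z₀)` at `z₀ ∈ bD` is `∂ρ(z₀)`, whose real part is normal to
`bD` and whose imaginary part is therefore a nonvanishing tangential form. Near `z₀` we write `bD`
as a graph over `ℝ × ker ∂ρ(z₀)`, with `Im ∂ρ(z₀)` as the `ℝ`-coordinate, and integrate by parts
once in that coordinate, which trades `Δ⁻²` for `Δ⁻¹` at the cost of a derivative of `f` and of the
surface density. The denominator `Δ` grows linearly in the `ℝ`-coordinate, and convexity gives the
finite-type bound `|Δ(w, z)| ≥ c |w - z|⁴`. Together they bound `Δ(·, z)⁻¹` in `L^{1+δ}`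
uniformly in `z`, so the remaining weakly singular integral is continuous up to the boundary. The
part of the integral away from `z₀` converges by dominated convergence.
-/

open Set Filter Topology Module Function
open scoped ENNReal NNReal

section AreaFormula

lemma hausdorffMeasure_image_le_mul_image {α X Y : Type*} [EMetricSpace X] [MeasurableSpace X]
    [BorelSpace X] [EMetricSpace Y] [MeasurableSpace Y] [BorelSpace Y] {f : α → X} {g : α → Y}
    {A : Set α} {K : ℝ≥0} (h : ∀ a ∈ A, ∀ b ∈ A, edist (f a) (f b) ≤ K * edist (g a) (g b))
    {d : ℝ} (hd : 0 ≤ d) : μH[d] (f '' A) ≤ (K : ℝ≥0∞) ^ d * μH[d] (g '' A) := by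
  rcases A.eq_empty_or_nonempty with rfl | ⟨a₀, -⟩
  · simp
  have : Nonempty α := ⟨a₀⟩
  set s := invFunOn g A
  have hs : ∀ a ∈ A, s (g a) ∈ A ∧ g (s (g a)) = g a := fun a ha =>
    invFunOn_pos ⟨a, ha, rfl⟩
  have hlip : LipschitzOnWith K (f ∘ s) (g '' A) := by
    rintro _ ⟨a, ha, rfl⟩ _ ⟨b, hb, rfl⟩
    simpa only [comp_apply, (hs a ha).2, (hs b hb).2] using h _ (hs a ha).1 _ (hs b hb).1
  have himage : (f ∘ s) '' (g '' A) = f '' A := by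
    rw [image_image]
    refine image_congr fun a ha => edist_le_zero.1 ?_
    simpa [(hs a ha).2] using h _ (hs a ha).1 a ha
  exact himage ▸ hlip.hausdorffMeasure_image_le hd

lemma eventually_smallSets_edist_le_of_hasStrictFDerivAt {E F : Type*} [NormedAddCommGroup E]
    [NormedSpace ℝ E] [FiniteDimensional ℝ E] [NormedAddCommGroup F] [NormedSpace ℝ F] {φ : E → F}
    {L : E →L[ℝ] F} {x : E} (hφ : HasStrictFDerivAt φ L x) (hL : Injective L) {K : ℝ≥0}
    (hK : 1 < K) :
    ∀ᶠ A in (𝓝 x).smallSets, ∀ a ∈ A, ∀ b ∈ A,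
      edist (φ a) (φ b) ≤ K * edist (L a) (L b) ∧ edist (L a) (L b) ≤ K * edist (φ a) (φ b) := by
  obtain ⟨M, hM, hanti⟩ := LinearMap.exists_antilipschitzWith (L : E →ₗ[ℝ] F)
    (LinearMap.ker_eq_bot.2 hL)
  have hK' : 0 < K - 1 := tsub_pos_of_lt hK
  obtain ⟨s, hs, happrox⟩ := hφ.approximates_deriv_on_nhds (c := (K - 1) / (K * M))
    (Or.inr (by positivity))
  filter_upwards [eventually_smallSets_subset.2 hs] with A hA a ha b hb
  have herr : ‖φ a - φ b - (L a - L b)‖ ≤ (K - 1) / K * ‖L a - L b‖ := by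
    calc ‖φ a - φ b - (L a - L b)‖ ≤ (K - 1) / (K * M) * ‖a - b‖ := by
          simpa [NNReal.coe_sub hK.le] using happrox a (hA ha) b (hA hb)
      _ ≤ (K - 1) / (K * M) * (M * ‖L a - L b‖) := by
          have : (1 : ℝ) ≤ K := mod_cast hK.le
          gcongr
          simpa [dist_eq_norm] using hanti.le_mul_dist a b
      _ = (K - 1) / K * ‖L a - L b‖ := by field_simp
  have hK1 : (1 : ℝ) < K := hK
  rw [div_mul_eq_mul_div, le_div_iff₀ (by positivity)] at herr
  have hfst := norm_le_insert' (φ a - φ b) (L a - L b)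
  have hsnd := norm_le_insert (φ a - φ b) (L a - L b)
  simp only [edist_dist, ← ENNReal.ofReal_coe_nnreal, ← ENNReal.ofReal_mul K.coe_nonneg,
    dist_eq_norm]
  constructor <;> refine ENNReal.ofReal_le_ofReal ?_
  · nlinarith [norm_nonneg (L a - L b), norm_nonneg (φ a - φ b - (L a - L b))]
  · nlinarith [norm_nonneg (φ a - φ b), norm_nonneg (L a - L b)]

lemma eq_of_forall_one_lt_le_mul {a b : ℝ≥0∞}
    (h : ∀ K : ℝ≥0, 1 < K → a ≤ K * b ∧ b ≤ K * a) : a = b := by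
  have hlim : ∀ q : ℝ≥0∞, Tendsto (fun K : ℝ≥0 => (K : ℝ≥0∞) * q) (𝓝[>] 1) (𝓝 q) := fun q => by
    simpa using ENNReal.Tendsto.mul_const
      ((ENNReal.continuous_coe.tendsto (1 : ℝ≥0)).mono_left nhdsWithin_le_nhds) (Or.inl one_ne_zero)
  exact le_antisymm
    (ge_of_tendsto (hlim _) (eventually_nhdsWithin_of_forall fun K hK => (h K hK).1))
    (ge_of_tendsto (hlim _) (eventually_nhdsWithin_of_forall fun K hK => (h K hK).2))

lemma eq_withDensity_of_eventually_smallSets {α : Type*} [MetricSpace α] [MeasurableSpace α]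
    [BorelSpace α] [SecondCountableTopology α] [HasBesicovitchCovering α] {μ ν : Measure α}
    [IsLocallyFiniteMeasure μ] [μ.IsOpenPosMeasure] {J : α → ℝ≥0∞} (hJ : ∀ x, J x ≠ ∞)
    (h : ∀ x, ∀ K : ℝ≥0, 1 < K → ∀ᶠ A in (𝓝 x).smallSets,
      ν A ≤ K * (J x * μ A) ∧ J x * μ A ≤ K * ν A) :
    ν = μ.withDensity J := by
  have hfinite : IsLocallyFiniteMeasure ν := ⟨fun x => by
    obtain ⟨s, hs, hμs⟩ := μ.finiteAt_nhds x
    obtain ⟨t, ht, hνt⟩ := eventually_smallSets.1 (h x 2 one_lt_two)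
    refine ⟨s ∩ t, inter_mem hs ht, (hνt _ inter_subset_right).1.trans_lt ?_⟩
    exact ENNReal.mul_lt_top ENNReal.coe_lt_top
      (ENNReal.mul_lt_top (hJ x).lt_top ((measure_mono inter_subset_left).trans_lt hμs))⟩
  have hac : ν ≪ μ := fun A hA => measure_null_of_locally_null A fun x _ => by
    obtain ⟨t, ht, hνt⟩ := eventually_smallSets.1 (h x 2 one_lt_two)
    refine ⟨A ∩ t, inter_mem_nhdsWithin A ht, nonpos_iff_eq_zero.1 ?_⟩
    simpa [measure_mono_null inter_subset_left hA] using (hνt (A ∩ t) inter_subset_right).1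
  rw [← Measure.withDensity_rnDeriv_eq ν μ hac]
  refine withDensity_congr_ae ?_
  filter_upwards [Besicovitch.ae_tendsto_rnDeriv ν μ] with x hx
  have hball : ∀ K : ℝ≥0, 1 < K → ∀ᶠ r in 𝓝[>] (0 : ℝ),
      ν (Metric.closedBall x r) / μ (Metric.closedBall x r) ≤ K * J x ∧
        J x ≤ K * (ν (Metric.closedBall x r) / μ (Metric.closedBall x r)) := by
    intro K hK
    obtain ⟨s, hs, hμs⟩ := μ.finiteAt_nhds x
    have hsmall := (tendsto_closedBall_smallSets x).mono_left (nhdsWithin_le_nhds (s := Ioi 0))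
    filter_upwards [hsmall.eventually (h x K hK),
      hsmall.eventually (eventually_smallSets_subset.2 hs), self_mem_nhdsWithin] with r hr hrs hr0
    have hpos := (Metric.measure_closedBall_pos μ x hr0).ne'
    have hfin := ((measure_mono hrs).trans_lt hμs).ne
    rw [ENNReal.div_le_iff hpos hfin, ← mul_div_assoc,
      ENNReal.le_div_iff_mul_le (Or.inl hpos) (Or.inl hfin), mul_assoc]
    exact hr
  exact eq_of_forall_one_lt_le_mul fun K hK =>
    ⟨le_of_tendsto hx ((hball K hK).mono fun _ h => h.1),
      ge_of_tendsto (ENNReal.Tendsto.const_mul hx (Or.inr ENNReal.coe_ne_top))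
        ((hball K hK).mono fun _ h => h.2)⟩

variable {X V : Type*} [NormedAddCommGroup X] [NormedSpace ℝ X] [FiniteDimensional ℝ X]
  [NormedAddCommGroup V] [InnerProductSpace ℝ V]

/-- The volume factor of a linear map on a finite-dimensional normed space, computed in Euclidean
coordinates; only its ratios are intrinsic. -/
def euclideanNormDet (L : X →L[ℝ] V) : ℝ :=
  LinearMap.normDet (L ∘L (toEuclidean (E := X)).symm.toContinuousLinearMap).toLinearMap

lemma euclideanNormDet_nonneg (L : X →L[ℝ] V) : 0 ≤ euclideanNormDet L :=
  LinearMap.normDet_nonneg _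

lemma euclideanNormDet_ne_zero {L : X →L[ℝ] V} (hL : Injective L) : euclideanNormDet L ≠ 0 :=
  ((LinearMap.normDet_ne_zero_tfae _).out 0 4).2 (hL.comp (toEuclidean (E := X)).symm.injective)

lemma contDiff_euclideanNormDet_fderiv {φ : X → V} {n : WithTop ℕ∞} (hφ : ContDiff ℝ (n + 1) φ)
    (hinj : ∀ x, Injective (fderiv ℝ φ x)) :
    ContDiff ℝ n fun x => euclideanNormDet (fderiv ℝ φ x) := by
  let b := EuclideanSpace.basisFun (Fin (finrank ℝ X)) ℝ
  have hgram : ∀ x, euclideanNormDet (fderiv ℝ φ x) ^ 2 =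
      (Matrix.gram ℝ (fun i => fderiv ℝ φ x (toEuclidean.symm (b i)))).det := fun x =>
    LinearMap.normDet_sq_eq_det_gram _ b
  have hsq : ContDiff ℝ n fun x => euclideanNormDet (fderiv ℝ φ x) ^ 2 := by
    have hfderiv : ContDiff ℝ n (fderiv ℝ φ) := hφ.fderiv_right le_rfl
    simp only [hgram, Matrix.det_apply, Matrix.gram_apply]
    exact ContDiff.sum fun σ _ => ContDiff.const_smul _ <| contDiff_prod fun i _ =>
      (hfderiv.clm_apply contDiff_const).inner ℝ (hfderiv.clm_apply contDiff_const)
  simpa only [Real.sqrt_sq (euclideanNormDet_nonneg _)] using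
    hsq.sqrt fun x => pow_ne_zero 2 (euclideanNormDet_ne_zero (hinj x))

variable [MeasurableSpace X] [BorelSpace X] [MeasurableSpace V] [BorelSpace V]

lemma exists_hausdorffMeasure_image_eq_euclideanNormDet_mul (μ : Measure X) [μ.IsAddHaarMeasure] :
    ∃ c : ℝ≥0, ∀ (L : X →L[ℝ] V) (A : Set X),
      μH[finrank ℝ X] (L '' A) = ENNReal.ofReal (c * euclideanNormDet L) * μ A := by
  let E := EuclideanSpace ℝ (Fin (finrank ℝ X))
  let e : X ≃L[ℝ] E := toEuclidean
  have hE : finrank ℝ E = finrank ℝ X := finrank_euclideanSpace_fin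
  have hν : (μH[finrank ℝ X] : Measure E).IsAddHaarMeasure := by
    have := isAddHaarMeasure_hausdorffMeasure (E := E)
    rwa [hE] at this
  have hmap : ((μH[finrank ℝ X] : Measure E).map e.symm).IsAddHaarMeasure :=
    e.symm.isAddHaarMeasure_map _
  refine ⟨((μH[finrank ℝ X] : Measure E).map e.symm).addHaarScalarFactor μ, fun L A => ?_⟩
  have himage : L '' A = (L ∘L e.symm.toContinuousLinearMap).toLinearMap '' (e '' A) := by
    simp [image_image]
  have hmeasure : (μH[finrank ℝ X] : Measure E) (e '' A) =
      (μH[finrank ℝ X] : Measure E).map e.symm A := by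
    rw [e.image_eq_preimage_symm]
    exact (e.symm.toHomeomorph.measurableEmbedding.map_apply _ A).symm
  have hlinear := LinearMap.hausdorffMeasure_image
    (L ∘L e.symm.toContinuousLinearMap).toLinearMap (e '' A)
  rw [hE, ← himage, hmeasure,
    Measure.isAddLeftInvariant_eq_smul (Measure.map e.symm _) μ] at hlinear
  rw [hlinear, mul_comm (_ : ℝ), ENNReal.ofReal_mul (euclideanNormDet_nonneg L), mul_assoc,
    ENNReal.ofReal_coe_nnreal]
  rfl

lemma comap_hausdorffMeasure_eq_withDensity_fderiv {μ : Measure X} [μ.IsAddHaarMeasure]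
    {φ : X → V} (hφ : ContDiff ℝ 1 φ) (hemb : MeasurableEmbedding φ)
    (hinj : ∀ x, Injective (fderiv ℝ φ x)) {J : (X →L[ℝ] V) → ℝ}
    (hJ : ∀ (L : X →L[ℝ] V) A, μH[finrank ℝ X] (L '' A) = ENNReal.ofReal (J L) * μ A) :
    Measure.comap φ μH[finrank ℝ X] =
      μ.withDensity fun x => ENNReal.ofReal (J (fderiv ℝ φ x)) := by
  refine eq_withDensity_of_eventually_smallSets (fun _ => ENNReal.ofReal_ne_top) fun x K hK => ?_
  obtain ⟨K', hK', hpow⟩ : ∃ K' : ℝ≥0, 1 < K' ∧ K' ^ (finrank ℝ X : ℝ) < K := by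
    have hcont : ContinuousAt (fun r : ℝ≥0 => r ^ (finrank ℝ X : ℝ)) 1 :=
      NNReal.continuousAt_rpow_const (Or.inl one_ne_zero)
    have hlt : ∀ᶠ r in 𝓝[>] (1 : ℝ≥0), r ^ (finrank ℝ X : ℝ) < K :=
      nhdsWithin_le_nhds (hcont.eventually_lt_const (by simpa using hK))
    exact (eventually_mem_nhdsWithin.and hlt).exists
  have hstrict := hφ.contDiffAt.hasStrictFDerivAt (x := x) one_ne_zero
  have hK'K : (K' : ℝ≥0∞) ^ (finrank ℝ X : ℝ) ≤ K := by
    rw [← ENNReal.coe_rpow_of_nonneg _ (Nat.cast_nonneg _)]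
    exact ENNReal.coe_le_coe.2 hpow.le
  filter_upwards [eventually_smallSets_edist_le_of_hasStrictFDerivAt hstrict (hinj x) hK']
    with A hA
  rw [hemb.comap_apply, ← hJ]
  exact ⟨(hausdorffMeasure_image_le_mul_image (fun a ha b hb => (hA a ha b hb).1)
      (Nat.cast_nonneg _)).trans (by gcongr),
    (hausdorffMeasure_image_le_mul_image (fun a ha b hb => (hA a ha b hb).2)
      (Nat.cast_nonneg _)).trans (by gcongr)⟩

theorem exists_contDiff_comap_hausdorffMeasure_eq_withDensity (μ : Measure X) [μ.IsAddHaarMeasure]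
    {φ : X → V} {n : WithTop ℕ∞} (hφ : ContDiff ℝ (n + 1) φ) (hemb : MeasurableEmbedding φ)
    (hinj : ∀ x, Injective (fderiv ℝ φ x)) :
    ∃ J : X → ℝ, ContDiff ℝ n J ∧ (∀ x, 0 ≤ J x) ∧
      Measure.comap φ μH[finrank ℝ X] = μ.withDensity fun x => ENNReal.ofReal (J x) := by
  obtain ⟨c, hc⟩ := exists_hausdorffMeasure_image_eq_euclideanNormDet_mul (V := V) μ
  exact ⟨fun x => c * euclideanNormDet (fderiv ℝ φ x),
    contDiff_const.mul (contDiff_euclideanNormDet_fderiv hφ hinj),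
    fun x => mul_nonneg c.coe_nonneg (euclideanNormDet_nonneg _),
    comap_hausdorffMeasure_eq_withDensity_fderiv (J := fun L => c * euclideanNormDet L)
      (hφ.of_le le_add_self) hemb hinj hc⟩

end AreaFormula

section WeaklySingularIntegrals

lemma lintegral_inv_enorm_sub_rpow_le {E : Type*} [NormedAddCommGroup E] [MeasurableSpace E]
    [BorelSpace E] (μ : Measure E) [μ.IsAddRightInvariant] {s : ℝ} (hs : 0 ≤ s) (A : Set E)
    (τ : E) :
    ∫⁻ x in A, (‖x - τ‖ₑ⁻¹) ^ s ∂μ ≤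
      ∫⁻ x in Metric.ball (0 : E) 1, (‖x‖ₑ⁻¹) ^ s ∂μ + μ A := by
  let near : E → ℝ≥0∞ := (Metric.ball (0 : E) 1).indicator fun x => (‖x‖ₑ⁻¹) ^ s
  have hpointwise : ∀ x, (‖x - τ‖ₑ⁻¹) ^ s ≤ near (x - τ) + 1 := fun x => by
    by_cases hx : x - τ ∈ Metric.ball (0 : E) 1
    · simp [near, indicator_of_mem hx]
    · refine le_add_left (ENNReal.rpow_le_one (ENNReal.inv_le_one.2 ?_) hs)
      rw [mem_ball_zero_iff, not_lt] at hx
      rwa [← ofReal_norm, ENNReal.one_le_ofReal]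
  calc ∫⁻ x in A, (‖x - τ‖ₑ⁻¹) ^ s ∂μ
    _ ≤ ∫⁻ x in A, (near (x - τ) + 1) ∂μ := lintegral_mono hpointwise
    _ = ∫⁻ x in A, near (x - τ) ∂μ + μ A := by
        rw [lintegral_add_right _ measurable_const, setLIntegral_one]
    _ ≤ ∫⁻ x, near (x - τ) ∂μ + μ A := by
        gcongr
        exact Measure.restrict_le_self
    _ = ∫⁻ x in Metric.ball (0 : E) 1, (‖x‖ₑ⁻¹) ^ s ∂μ + μ A := by
        rw [lintegral_sub_right_eq_self, lintegral_indicator Metric.isOpen_ball.measurableSet]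

section Riesz

variable {E : Type*} [NormedAddCommGroup E] [NormedSpace ℝ E] [FiniteDimensional ℝ E]
  [MeasurableSpace E] [BorelSpace E] (μ : Measure E) [μ.IsAddHaarMeasure] {s : ℝ}

lemma lintegral_ball_inv_enorm_rpow_ne_top (hs₀ : 0 ≤ s) (hs : s < finrank ℝ E) (r : ℝ) :
    ∫⁻ x in Metric.ball (0 : E) r, (‖x‖ₑ⁻¹) ^ s ∂μ ≠ ∞ := by
  rcases le_or_gt r 0 with hr | hr
  · simp [Metric.ball_eq_empty.2 hr]
  have hdim : 0 < finrank ℝ E := Nat.cast_pos.1 (hs₀.trans_lt hs)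
  have : Nontrivial E := Module.finrank_pos_iff.1 hdim
  have hintegrable : IntegrableOn (fun x : E => ‖x‖ ^ (-s)) (Metric.ball 0 r) μ := by
    refine (integrableOn_fun_norm_addHaar μ (f := fun y : ℝ => y ^ (-s))).2 ?_
    have hradial : IntegrableOn (fun y : ℝ => y ^ ((finrank ℝ E : ℝ) - 1 - s)) (Ioo 0 r) := by
      rw [intervalIntegral.integrableOn_Ioo_rpow_iff hr]
      linarith
    refine hradial.congr_fun (fun y hy => ?_) measurableSet_Ioo
    rw [smul_eq_mul, ← Real.rpow_natCast, ← Real.rpow_add hy.1, Nat.cast_sub hdim, Nat.cast_one,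
      sub_eq_add_neg _ s]
  refine (lt_of_le_of_lt (lintegral_mono_ae ?_) hintegrable.hasFiniteIntegral).ne
  have hne : ∀ᵐ x ∂μ.restrict (Metric.ball (0 : E) r), x ≠ 0 :=
    ae_restrict_of_ae (by simp [ae_iff])
  filter_upwards [hne] with x hx
  have hpos : 0 < ‖x‖ := norm_pos_iff.2 hx
  rw [Real.enorm_eq_ofReal (by positivity), ← ofReal_norm, Real.rpow_neg hpos.le,
    ← ENNReal.ofReal_inv_of_pos hpos, ENNReal.ofReal_rpow_of_nonneg (by positivity) hs₀,
    Real.inv_rpow hpos.le]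

lemma exists_forall_lintegral_inv_enorm_sub_rpow_le (hs₀ : 0 ≤ s) (hs : s < finrank ℝ E)
    {A : Set E} (hA : μ A ≠ ∞) :
    ∃ C : ℝ≥0∞, C ≠ ∞ ∧ ∀ τ, ∫⁻ x in A, (‖x - τ‖ₑ⁻¹) ^ s ∂μ ≤ C :=
  ⟨_, ENNReal.add_ne_top.2 ⟨lintegral_ball_inv_enorm_rpow_ne_top μ hs₀ hs 1, hA⟩,
    lintegral_inv_enorm_sub_rpow_le μ hs₀ A⟩

end Riesz

lemma inv_enorm_rpow_le {E F : Type*} [SeminormedAddCommGroup E] [SeminormedAddCommGroup F]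
    {x : E} {ξ : F} {c s : ℝ} {n : ℕ} (hc : 0 < c) (hs : 0 ≤ s) (h : c * ‖x‖ ^ n ≤ ‖ξ‖) :
    (‖ξ‖ₑ⁻¹) ^ s ≤ (ENNReal.ofReal c)⁻¹ ^ s * (‖x‖ₑ⁻¹) ^ (n * s) := by
  have hinv : ‖ξ‖ₑ⁻¹ ≤ (ENNReal.ofReal c)⁻¹ * (‖x‖ₑ⁻¹) ^ n := by
    rw [← ENNReal.inv_pow, ← ENNReal.mul_inv (Or.inl (by simpa using hc)) (Or.inl (by simp)),
      ENNReal.inv_le_inv, ← ofReal_norm, ← ofReal_norm, ← ENNReal.ofReal_pow (norm_nonneg x),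
      ← ENNReal.ofReal_mul hc.le]
    exact ENNReal.ofReal_le_ofReal h
  calc (‖ξ‖ₑ⁻¹) ^ s ≤ ((ENNReal.ofReal c)⁻¹ * (‖x‖ₑ⁻¹) ^ n) ^ s := by gcongr
    _ = (ENNReal.ofReal c)⁻¹ ^ s * (‖x‖ₑ⁻¹) ^ (n * s) := by
        rw [ENNReal.mul_rpow_of_nonneg _ _ hs, ENNReal.rpow_mul, ENNReal.rpow_natCast]

lemma exists_mem_forall_mul_dist_le_norm {X F : Type*} [PseudoMetricSpace X]
    [SeminormedAddCommGroup F] {I : Set X} (hI : IsCompact I) (hne : I.Nonempty) {p : X → F}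
    (hp : ContinuousOn p I) {m : ℝ} (h : ∀ t ∈ I, ∀ t' ∈ I, m * dist t t' ≤ ‖p t - p t'‖) :
    ∃ τ ∈ I, ∀ t ∈ I, m / 2 * dist t τ ≤ ‖p t‖ := by
  obtain ⟨τ, hτ, hmin⟩ := hI.exists_isMinOn hne hp.norm
  refine ⟨τ, hτ, fun t ht => ?_⟩
  linarith [h t ht τ hτ, isMinOn_iff.1 hmin t ht, norm_sub_le (p t) (p τ)]

lemma exists_forall_lintegral_inv_enorm_rpow_le_of_mul_dist_le {E F : Type*}
    [NormedAddCommGroup E] [NormedSpace ℝ E] [FiniteDimensional ℝ E] [MeasurableSpace E]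
    [BorelSpace E] (μ : Measure E) [μ.IsAddHaarMeasure] [SeminormedAddCommGroup F] {I : Set E}
    (hI : IsCompact I) {m s : ℝ} (hm : 0 < m) (hs₀ : 0 ≤ s) (hs : s < finrank ℝ E) :
    ∃ C : ℝ≥0∞, C ≠ ∞ ∧ ∀ p : E → F, ContinuousOn p I →
      (∀ t ∈ I, ∀ t' ∈ I, m * dist t t' ≤ ‖p t - p t'‖) →
      ∫⁻ t in I, (‖p t‖ₑ⁻¹) ^ s ∂μ ≤ C := by
  obtain ⟨C, hC, hle⟩ :=
    exists_forall_lintegral_inv_enorm_sub_rpow_le μ hs₀ hs hI.measure_ne_top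
  set a := (ENNReal.ofReal (m / 2))⁻¹ ^ s
  have ha : a ≠ ∞ := ENNReal.rpow_ne_top_of_nonneg hs₀ (by simpa using hm)
  refine ⟨a * C, ENNReal.mul_ne_top ha hC, fun p hp hsep => ?_⟩
  rcases I.eq_empty_or_nonempty with rfl | hne
  · simp
  obtain ⟨τ, -, hτ⟩ := exists_mem_forall_mul_dist_le_norm hI hne hp hsep
  calc ∫⁻ t in I, (‖p t‖ₑ⁻¹) ^ s ∂μ
      ≤ ∫⁻ t in I, a * (‖t - τ‖ₑ⁻¹) ^ s ∂μ := by
        refine setLIntegral_mono' hI.measurableSet fun t ht => ?_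
        simpa using inv_enorm_rpow_le (n := 1) (half_pos hm) hs₀
          (by simpa [dist_eq_norm] using hτ t ht)
    _ = a * ∫⁻ t in I, (‖t - τ‖ₑ⁻¹) ^ s ∂μ := lintegral_const_mul _ (by fun_prop)
    _ ≤ a * C := by gcongr; exact hle τ

/-- The exponent `s + s'` is paid for twice: `s` by the growth of `q` along the first factor and
`s'` by its weaker growth, of order `n`, along the second. -/
lemma exists_forall_lintegral_prod_inv_enorm_rpow_le {E Y F : Type*} [NormedAddCommGroup E]
    [NormedSpace ℝ E] [FiniteDimensional ℝ E] [MeasurableSpace E] [BorelSpace E]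
    (ν : Measure E) [ν.IsAddHaarMeasure] [NormedAddCommGroup Y] [NormedSpace ℝ Y]
    [FiniteDimensional ℝ Y] [MeasurableSpace Y] [BorelSpace Y] (μ : Measure Y)
    [μ.IsAddHaarMeasure] [NormedAddCommGroup F] {I : Set E} (hI : IsCompact I) {B : Set Y}
    (hB : IsCompact B) {m c s s' : ℝ} {n : ℕ} (hm : 0 < m) (hc : 0 < c) (hs₀ : 0 ≤ s)
    (hs : s < finrank ℝ E) (hs'₀ : 0 ≤ s') (hs' : n * s' < finrank ℝ Y) :
    ∃ C : ℝ≥0∞, C ≠ ∞ ∧ ∀ (ζ : Y) (q : E × Y → F), Continuous q →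
      (∀ y ∈ B, ∀ t ∈ I, ∀ t' ∈ I, m * dist t t' ≤ ‖q (t, y) - q (t', y)‖) →
      (∀ y ∈ B, ∀ t ∈ I, c * ‖y - ζ‖ ^ n ≤ ‖q (t, y)‖) →
      ∫⁻ x in I ×ˢ B, (‖q x‖ₑ⁻¹) ^ (s + s') ∂(ν.prod μ) ≤ C := by
  obtain ⟨C₁, hC₁, hI'⟩ :=
    exists_forall_lintegral_inv_enorm_rpow_le_of_mul_dist_le (F := F) ν hI hm hs₀ hs
  obtain ⟨C₂, hC₂, hB'⟩ := exists_forall_lintegral_inv_enorm_sub_rpow_le μ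
    (by positivity) hs' hB.measure_ne_top
  set b := (ENNReal.ofReal c)⁻¹ ^ s'
  have hb : b ≠ ∞ := ENNReal.rpow_ne_top_of_nonneg hs'₀ (by simpa using hc)
  refine ⟨C₁ * b * C₂, by finiteness, fun ζ q hq hqI hqB => ?_⟩
  have hslice : ∀ y ∈ B, ∫⁻ t in I, (‖q (t, y)‖ₑ⁻¹) ^ (s + s') ∂ν ≤
      C₁ * b * (‖y - ζ‖ₑ⁻¹) ^ (n * s') := fun y hy => by
    have hqy : Continuous fun t => q (t, y) := by fun_prop
    calc ∫⁻ t in I, (‖q (t, y)‖ₑ⁻¹) ^ (s + s') ∂ν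
        ≤ ∫⁻ t in I, (‖q (t, y)‖ₑ⁻¹) ^ s * (b * (‖y - ζ‖ₑ⁻¹) ^ (n * s')) ∂ν := by
          refine setLIntegral_mono' hI.measurableSet fun t ht => ?_
          rw [ENNReal.rpow_add_of_nonneg _ _ hs₀ hs'₀]
          gcongr
          exact inv_enorm_rpow_le hc hs'₀ (hqB y hy t ht)
      _ = (∫⁻ t in I, (‖q (t, y)‖ₑ⁻¹) ^ s ∂ν) * (b * (‖y - ζ‖ₑ⁻¹) ^ (n * s')) :=
          lintegral_mul_const _ (hqy.enorm.measurable.inv.pow_const s)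
      _ ≤ C₁ * (b * (‖y - ζ‖ₑ⁻¹) ^ (n * s')) := by
          gcongr
          exact hI' _ hqy.continuousOn (hqI y hy)
      _ = C₁ * b * (‖y - ζ‖ₑ⁻¹) ^ (n * s') := (mul_assoc _ _ _).symm
  rw [← Measure.prod_restrict, lintegral_prod_symm _ (by fun_prop)]
  calc ∫⁻ y in B, (∫⁻ t in I, (‖q (t, y)‖ₑ⁻¹) ^ (s + s') ∂ν) ∂μ
      ≤ ∫⁻ y in B, C₁ * b * (‖y - ζ‖ₑ⁻¹) ^ (n * s') ∂μ :=
        setLIntegral_mono' hB.measurableSet hslice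
    _ = C₁ * b * ∫⁻ y in B, (‖y - ζ‖ₑ⁻¹) ^ (n * s') ∂μ := lintegral_const_mul _ (by fun_prop)
    _ ≤ C₁ * b * C₂ := by gcongr; exact hB' ζ

end WeaklySingularIntegrals

section TruncatedInverse

/-- A continuous substitute for `ζ ↦ ζ⁻¹`: it agrees with the inverse where `η ≤ ‖ζ‖` and is
smaller near the origin. -/
def truncatedInv (η : ℝ) (ζ : ℂ) : ℂ := starRingEnd ℂ ζ / (max ‖ζ‖ η ^ 2 : ℝ)

variable {η : ℝ}

lemma continuous_truncatedInv (hη : 0 < η) : Continuous (truncatedInv η) := by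
  refine Complex.continuous_conj.div (by fun_prop) fun ζ => ?_
  have : 0 < max ‖ζ‖ η := lt_max_of_lt_right hη
  exact ofReal_ne_zero.2 (by positivity)

lemma inv_eq_conj_div_norm_sq (ζ : ℂ) : ζ⁻¹ = starRingEnd ℂ ζ / (‖ζ‖ ^ 2 : ℝ) := by
  rw [Complex.inv_def, Complex.normSq_eq_norm_sq, Complex.ofReal_inv, div_eq_mul_inv]

lemma truncatedInv_eq_inv {ζ : ℂ} (h : η ≤ ‖ζ‖) : truncatedInv η ζ = ζ⁻¹ := by
  rw [truncatedInv, max_eq_left h, inv_eq_conj_div_norm_sq]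

lemma norm_inv_sub_truncatedInv_le {ζ : ℂ} (hζ : ζ ≠ 0) : ‖ζ⁻¹ - truncatedInv η ζ‖ ≤ ‖ζ‖⁻¹ := by
  have hpos : 0 < ‖ζ‖ := norm_pos_iff.2 hζ
  have : 0 < max ‖ζ‖ η := lt_max_of_lt_left hpos
  have hle : (max ‖ζ‖ η ^ 2)⁻¹ ≤ (‖ζ‖ ^ 2)⁻¹ := by gcongr; exact le_max_left _ _
  have hdiff : ζ⁻¹ - truncatedInv η ζ =
      starRingEnd ℂ ζ * ((‖ζ‖ ^ 2)⁻¹ - (max ‖ζ‖ η ^ 2)⁻¹ : ℝ) := by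
    rw [inv_eq_conj_div_norm_sq, truncatedInv]
    push_cast
    ring
  rw [hdiff, norm_mul, Complex.norm_conj, Complex.norm_real, Real.norm_of_nonneg (sub_nonneg.2 hle)]
  calc ‖ζ‖ * ((‖ζ‖ ^ 2)⁻¹ - (max ‖ζ‖ η ^ 2)⁻¹) ≤ ‖ζ‖ * (‖ζ‖ ^ 2)⁻¹ := by
        gcongr
        exact sub_le_self _ (by positivity)
    _ = ‖ζ‖⁻¹ := by field_simp

lemma enorm_inv_sub_truncatedInv_le (ζ : ℂ) {δ : ℝ} (hδ : 0 ≤ δ) :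
    ‖ζ⁻¹ - truncatedInv η ζ‖ₑ ≤ ENNReal.ofReal η ^ δ * (‖ζ‖ₑ⁻¹) ^ (1 + δ) := by
  rcases eq_or_ne ζ 0 with rfl | hζ
  · simp [truncatedInv]
  rcases le_or_gt η ‖ζ‖ with h | h
  · simp [truncatedInv_eq_inv h]
  have hne : ‖ζ‖ₑ ≠ 0 := enorm_ne_zero.2 hζ
  calc ‖ζ⁻¹ - truncatedInv η ζ‖ₑ ≤ ‖ζ‖ₑ⁻¹ := by
        rw [← enorm_inv hζ, enorm_le_iff_norm_le, norm_inv]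
        exact norm_inv_sub_truncatedInv_le hζ
    _ = ‖ζ‖ₑ ^ δ * (‖ζ‖ₑ⁻¹) ^ (1 + δ) := by
        rw [ENNReal.inv_rpow, ← ENNReal.rpow_neg, ← ENNReal.rpow_add _ _ hne enorm_ne_top,
          ← ENNReal.rpow_neg_one]
        ring_nf
    _ ≤ ENNReal.ofReal η ^ δ * (‖ζ‖ₑ⁻¹) ^ (1 + δ) := by
        gcongr
        rw [← ofReal_norm]
        exact ENNReal.ofReal_le_ofReal h.le

section Integral

variable {X : Type*} [MeasurableSpace X] {μ : Measure X} {K : Set X} {B C : ℝ≥0∞} {δ : ℝ}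

lemma setLIntegral_enorm_mul_inv_sub_le {k q : X → ℂ} (hKm : MeasurableSet K) (hq : Measurable q)
    (hkB : ∀ x ∈ K, ‖k x‖ₑ ≤ B) (hδ : 0 ≤ δ)
    (hqC : ∫⁻ x in K, (‖q x‖ₑ⁻¹) ^ (1 + δ) ∂μ ≤ C) :
    ∫⁻ x in K, ‖k x * (q x)⁻¹ - k x * truncatedInv η (q x)‖ₑ ∂μ ≤
      B * ENNReal.ofReal η ^ δ * C :=
  calc ∫⁻ x in K, ‖k x * (q x)⁻¹ - k x * truncatedInv η (q x)‖ₑ ∂μ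
    _ ≤ ∫⁻ x in K, B * ENNReal.ofReal η ^ δ * (‖q x‖ₑ⁻¹) ^ (1 + δ) ∂μ := by
        refine setLIntegral_mono' hKm fun x hx => ?_
        rw [← mul_sub, enorm_mul, mul_assoc]
        exact mul_le_mul' (hkB x hx) (enorm_inv_sub_truncatedInv_le _ hδ)
    _ = B * ENNReal.ofReal η ^ δ * ∫⁻ x in K, (‖q x‖ₑ⁻¹) ^ (1 + δ) ∂μ :=
        lintegral_const_mul _ (hq.enorm.inv.pow_const _)
    _ ≤ B * ENNReal.ofReal η ^ δ * C := by gcongr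

variable [TopologicalSpace X] [BorelSpace X] [IsLocallyFiniteMeasure μ]

lemma norm_integral_mul_inv_sub_le {k q : X → ℂ} (hK : IsCompact K) (hKm : MeasurableSet K)
    (hk : Continuous k) (hq : Continuous q) (hB : B ≠ ∞) (hkB : ∀ x ∈ K, ‖k x‖ₑ ≤ B)
    (hδ : 0 ≤ δ) (hC : C ≠ ∞) (hqC : ∫⁻ x in K, (‖q x‖ₑ⁻¹) ^ (1 + δ) ∂μ ≤ C) (hη : 0 < η) :
    ‖∫ x in K, k x * (q x)⁻¹ ∂μ - ∫ x in K, k x * truncatedInv η (q x) ∂μ‖ ≤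
      (B * ENNReal.ofReal η ^ δ * C).toReal := by
  have herror := setLIntegral_enorm_mul_inv_sub_le (η := η) hKm hq.measurable hkB hδ hqC
  have hfinite : B * ENNReal.ofReal η ^ δ * C ≠ ∞ := by finiteness
  have hcont : Continuous fun x => k x * truncatedInv η (q x) :=
    hk.mul ((continuous_truncatedInv hη).comp hq)
  have hintegrable : IntegrableOn (fun x => k x * truncatedInv η (q x)) K μ :=
    hcont.continuousOn.integrableOn_compact' hK hKm
  have hintegrable_sub :
      IntegrableOn (fun x => k x * (q x)⁻¹ - k x * truncatedInv η (q x)) K μ :=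
    ⟨((hk.measurable.mul hq.measurable.inv).sub hcont.measurable).aestronglyMeasurable,
      herror.trans_lt hfinite.lt_top⟩
  have hintegrable_inv : IntegrableOn (fun x => k x * (q x)⁻¹) K μ := by
    simpa only [Pi.add_def, sub_add_cancel] using hintegrable_sub.add hintegrable
  rw [← integral_sub hintegrable_inv hintegrable]
  refine (norm_integral_le_lintegral_norm _).trans ?_
  simp_rw [ofReal_norm]
  exact ENNReal.toReal_mono hfinite herror

/-- A bound in `L^{1+δ}`, uniform in the parameter, makes the continuous approximations
`∫ k · truncatedInv η q` converge uniformly as `η → 0`. -/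
theorem continuousOn_integral_mul_inv {Z : Type*} [TopologicalSpace Z] [FirstCountableTopology Z]
    [LocallyCompactSpace Z] {S : Set Z} {k q : X → Z → ℂ} (hK : IsCompact K) (hKm : MeasurableSet K)
    (hk : Continuous (uncurry k)) (hq : Continuous (uncurry q)) (hB : B ≠ ∞)
    (hkB : ∀ z ∈ S, ∀ x ∈ K, ‖k x z‖ₑ ≤ B) (hδ : 0 < δ) (hC : C ≠ ∞)
    (hqC : ∀ z ∈ S, ∫⁻ x in K, (‖q x z‖ₑ⁻¹) ^ (1 + δ) ∂μ ≤ C) :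
    ContinuousOn (fun z => ∫ x in K, k x z * (q x z)⁻¹ ∂μ) S := by
  refine continuousOn_of_uniform_approx_of_continuousOn fun u hu => ?_
  obtain ⟨ε, hε, hεu⟩ := Metric.mem_uniformity_dist.mp hu
  have herror_tendsto :
      Tendsto (fun η : ℝ => (B * ENNReal.ofReal η ^ δ * C).toReal) (𝓝[>] 0) (𝓝 0) := by
    have hlim : Tendsto (fun η : ℝ => B.toReal * η ^ δ * C.toReal) (𝓝 0) (𝓝 0) := by
      have hcont : Continuous fun η : ℝ => B.toReal * η ^ δ * C.toReal := by
        fun_prop (disch := positivity)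
      simpa [Real.zero_rpow hδ.ne'] using hcont.tendsto 0
    refine (hlim.mono_left nhdsWithin_le_nhds).congr' ?_
    filter_upwards [self_mem_nhdsWithin] with η (hη : 0 < η)
    rw [ENNReal.toReal_mul, ENNReal.toReal_mul, ← ENNReal.toReal_rpow,
      ENNReal.toReal_ofReal hη.le]
  obtain ⟨η, herror, hη⟩ :=
    ((herror_tendsto.eventually (gt_mem_nhds hε)).and self_mem_nhdsWithin).exists
  refine ⟨fun z => ∫ x in K, k x z * truncatedInv η (q x z) ∂μ, ?_, fun z hz => hεu ?_⟩
  · have hcont := (hk.mul ((continuous_truncatedInv hη).comp hq)).comp (continuous_swap (X := Z))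
    exact (continuous_parametric_integral_of_continuous
      (f := fun z x => k x z * truncatedInv η (q x z)) hcont hK).continuousOn
  · have hkz : Continuous fun x => k x z := hk.comp (.prodMk_left z)
    have hqz : Continuous fun x => q x z := hq.comp (.prodMk_left z)
    rw [dist_eq_norm]
    exact (norm_integral_mul_inv_sub_le hK hKm hkz hqz hB (hkB z hz) hδ.le hC (hqC z hz)
      hη).trans_lt herror

end Integral

end TruncatedInverse

section IntegrationByParts

variable {X : Type*} [NormedAddCommGroup X] [NormedSpace ℝ X] {K : Set X} {P q : X → ℂ}

lemma contDiff_mul_inv_of_eq_zero_off (hK : IsClosed K) (hP : ContDiff ℝ 1 P)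
    (hq : ContDiff ℝ 1 q) (hPK : ∀ x ∉ K, P x = 0) (hqK : ∀ x ∈ K, q x ≠ 0) :
    ContDiff ℝ 1 fun x => P x * (q x)⁻¹ := by
  refine contDiff_iff_contDiffAt.2 fun x => ?_
  by_cases hx : x ∈ K
  · exact hP.contDiffAt.mul (hq.contDiffAt.inv (hqK x hx))
  · refine (contDiffAt_const (c := 0)).congr_of_eventuallyEq ?_
    filter_upwards [hK.isOpen_compl.mem_nhds hx] with y hy
    rw [hPK y hy, zero_mul]

lemma fderiv_mul_inv_apply {x : X} (hP : DifferentiableAt ℝ P x) (hq : DifferentiableAt ℝ q x)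
    (hx : q x ≠ 0) (v : X) :
    fderiv ℝ (fun x => P x * (q x)⁻¹) x v =
      fderiv ℝ P x v * (q x)⁻¹ - P x * fderiv ℝ q x v / q x ^ 2 := by
  have hinv : HasFDerivAt (fun x => (q x)⁻¹) _ x :=
    (hasDerivAt_inv hx).comp_hasFDerivAt x hq.hasFDerivAt
  have hmul : HasFDerivAt (fun x => P x * (q x)⁻¹) _ x := hP.hasFDerivAt.mul hinv
  rw [hmul.fderiv]
  simp only [add_apply, smul_apply, smul_eq_mul]
  ring

variable [FiniteDimensional ℝ X] [MeasurableSpace X] [BorelSpace X] (μ : Measure X)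
  [μ.IsAddHaarMeasure]

lemma integral_fderiv_apply_eq_zero {F : X → ℂ} (hF : ContDiff ℝ 1 F) (hsupp : HasCompactSupport F)
    (v : X) : ∫ x, fderiv ℝ F x v ∂μ = 0 := by
  have hderiv : Continuous fun x => fderiv ℝ F x v :=
    (hF.continuous_fderiv one_ne_zero).clm_apply continuous_const
  have hparts := integral_mul_fderiv_eq_neg_fderiv_mul_of_integrable (μ := μ)
    (f := fun _ => (1 : ℂ)) (g := F) (v := v) (by simp)
    (by simpa using hderiv.integrable_of_hasCompactSupport (hsupp.fderiv_apply ℝ v))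
    (by simpa using hF.continuous.integrable_of_hasCompactSupport hsupp)
    (fun _ _ => differentiableAt_const _) (fun x _ => hF.differentiable one_ne_zero x)
  simpa using hparts

lemma integral_mul_fderiv_div_sq (hK : IsCompact K) (hP : ContDiff ℝ 1 P) (hq : ContDiff ℝ 1 q)
    (hPK : ∀ x ∉ K, P x = 0) (hqK : ∀ x ∈ K, q x ≠ 0) (v : X) :
    ∫ x, P x * fderiv ℝ q x v / q x ^ 2 ∂μ = ∫ x in K, fderiv ℝ P x v * (q x)⁻¹ ∂μ := by
  let F : X → ℂ := fun x => P x * (q x)⁻¹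
  have hF : ContDiff ℝ 1 F := contDiff_mul_inv_of_eq_zero_off hK.isClosed hP hq hPK hqK
  have hFK : ∀ x ∉ K, F x = 0 := fun x hx => by simp [F, hPK x hx]
  have hF'K : ∀ x ∉ K, fderiv ℝ F x v = 0 := fun x hx => by
    have : F =ᶠ[𝓝 x] fun _ => 0 := by
      filter_upwards [hK.isClosed.isOpen_compl.mem_nhds hx] with y hy using hFK y hy
    rw [this.fderiv_eq, fderiv_const_apply, zero_apply]
  have hderiv : Continuous fun x => fderiv ℝ F x v :=
    (hF.continuous_fderiv one_ne_zero).clm_apply continuous_const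
  have hintP : IntegrableOn (fun x => fderiv ℝ P x v * (q x)⁻¹) K μ :=
    ((((hP.continuous_fderiv one_ne_zero).clm_apply continuous_const).continuousOn).mul
      (hq.continuous.continuousOn.inv₀ hqK)).integrableOn_compact hK
  calc ∫ x, P x * fderiv ℝ q x v / q x ^ 2 ∂μ
    _ = ∫ x in K, P x * fderiv ℝ q x v / q x ^ 2 ∂μ :=
        (setIntegral_eq_integral_of_forall_compl_eq_zero fun x hx => by simp [hPK x hx]).symm
    _ = ∫ x in K, fderiv ℝ P x v * (q x)⁻¹ - fderiv ℝ F x v ∂μ := by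
        refine setIntegral_congr_fun hK.measurableSet fun x hx => ?_
        simp only [F, fderiv_mul_inv_apply (hP.differentiable one_ne_zero x)
          (hq.differentiable one_ne_zero x) (hqK x hx), sub_sub_cancel]
    _ = ∫ x in K, fderiv ℝ P x v * (q x)⁻¹ ∂μ - ∫ x in K, fderiv ℝ F x v ∂μ :=
        integral_sub hintP (hderiv.continuousOn.integrableOn_compact hK)
    _ = ∫ x in K, fderiv ℝ P x v * (q x)⁻¹ ∂μ := by
        rw [setIntegral_eq_integral_of_forall_compl_eq_zero hF'K,
          integral_fderiv_apply_eq_zero μ hF (.intro hK hFK), sub_zero]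

lemma integral_div_sq_eq_setIntegral {g h : X → ℂ} {v : X} (hK : IsCompact K) (hg : ContDiff ℝ 1 g)
    (hh : ContDiff ℝ 1 h) (hq : ContDiff ℝ 1 q) (hgK : ∀ x ∉ K, g x = 0)
    (hqK : ∀ x ∈ K, q x ≠ 0) (hhK : ∀ x ∈ K, h x * fderiv ℝ q x v = 1) :
    ∫ x, g x / q x ^ 2 ∂μ = ∫ x in K, fderiv ℝ (fun x => g x * h x) x v * (q x)⁻¹ ∂μ := by
  rw [← integral_mul_fderiv_div_sq μ hK (hg.mul hh) hq (fun x hx => by simp [hgK x hx]) hqK]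
  congr! 3 with x
  by_cases hx : x ∈ K
  · rw [mul_assoc, hhK x hx, mul_one]
  · simp [hgK x hx]

end IntegrationByParts

section LocalLimit

lemma exists_contDiff_eventuallyEq {X F : Type*} [NormedAddCommGroup X] [NormedSpace ℝ X]
    [HasContDiffBump X] [NormedAddCommGroup F] [NormedSpace ℝ F] {h : X → F} {x₀ : X} {n : ℕ}
    (hh : ContDiffAt ℝ n h x₀) : ∃ g : X → F, ContDiff ℝ n g ∧ g =ᶠ[𝓝 x₀] h := by
  obtain ⟨r, hr, hball⟩ :=
    Metric.nhds_basis_closedBall.mem_iff.mp (hh.eventually (by simp))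
  let b : ContDiffBump x₀ := ⟨r / 2, r, by positivity, by linarith⟩
  refine ⟨fun x => b x • h x, contDiff_iff_contDiffAt.2 fun x => ?_, ?_⟩
  · by_cases hx : x ∈ Metric.closedBall x₀ r
    · exact b.contDiffAt.smul (hball hx)
    · refine (contDiffAt_const (c := 0)).congr_of_eventuallyEq ?_
      filter_upwards [Metric.isClosed_closedBall.isOpen_compl.mem_nhds hx] with y hy
      rw [b.zero_of_le_dist (not_le.1 (mt Metric.mem_closedBall.2 hy)).le, zero_smul]
  · filter_upwards [b.eventuallyEq_one] with y hy
    rw [hy, Pi.one_apply, one_smul]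

lemma mul_dist_le_norm_sub_of_norm_deriv_sub_le {F : Type*} [NormedAddCommGroup F]
    [NormedSpace ℝ F] {f f' : ℝ → F} {s : Set ℝ} (hs : Convex ℝ s) {a : F} {ε : ℝ}
    (hf : ∀ t ∈ s, HasDerivAt f (f' t) t) (hε : ∀ t ∈ s, ‖f' t - a‖ ≤ ε) {t t' : ℝ}
    (ht : t ∈ s) (ht' : t' ∈ s) : (‖a‖ - ε) * dist t t' ≤ ‖f t - f t'‖ := by
  have hmean : ‖f t - t • a - (f t' - t' • a)‖ ≤ ε * ‖t - t'‖ :=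
    hs.norm_image_sub_le_of_norm_hasDerivWithin_le (f := fun t => f t - t • a)
      (fun t ht => by
        simpa only [one_smul] using
          ((hf t ht).fun_sub ((hasDerivAt_id' t).smul_const a)).hasDerivWithinAt)
      hε ht' ht
  have hsplit : (t - t') • a = (f t - f t') - (f t - t • a - (f t' - t' • a)) := by
    rw [sub_smul]; abel
  have htriangle := norm_sub_le (f t - f t') (f t - t • a - (f t' - t' • a))
  rw [← hsplit, norm_smul] at htriangle
  rw [Real.dist_eq, ← Real.norm_eq_abs]
  linarith

section ParamDeriv

variable {X Z F : Type*} [NormedAddCommGroup X] [NormedSpace ℝ X] [NormedAddCommGroup Z]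
  [NormedSpace ℝ Z] [NormedAddCommGroup F] [NormedSpace ℝ F]

/-- The derivative of `q x z` with respect to `x` in the direction `v`, for a fixed value of the
parameter `z`. -/
def paramDeriv (q : X → Z → F) (v : X) (x : X) (z : Z) : F := fderiv ℝ (fun x => q x z) x v

lemma contDiff_paramDeriv {q : X → Z → F} {m n : WithTop ℕ∞} (hq : ContDiff ℝ n (uncurry q))
    (hmn : m + 1 ≤ n) (v : X) : ContDiff ℝ m (uncurry (paramDeriv q v)) := by
  have hq' : ContDiff ℝ n (uncurry fun (p : X × Z) (x : X) => q x p.2) :=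
    hq.comp (contDiff_snd.prodMk (contDiff_snd.comp contDiff_fst))
  exact (hq'.fderiv contDiff_fst hmn).clm_apply contDiff_const

lemma hasDerivAt_paramDeriv {Y : Type*} [NormedAddCommGroup Y] [NormedSpace ℝ Y]
    {q : ℝ × Y → Z → F} (hq : Differentiable ℝ (uncurry q)) (t : ℝ) (y : Y)
    (z : Z) : HasDerivAt (fun t => q (t, y) z) (paramDeriv q (1, 0) (t, y) z) t := by
  have hfderiv : HasFDerivAt (fun x => q x z) (fderiv ℝ (fun x => q x z) (t, y)) (t, y) :=
    (hq.comp (differentiable_id.prodMk (differentiable_const z)) (t, y)).hasFDerivAt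
  have hline : HasDerivAt (fun t : ℝ => (t, y)) (1, 0) t :=
    (hasDerivAt_id t).prodMk (hasDerivAt_const t y)
  exact hfderiv.comp_hasDerivAt t hline

lemma exists_contDiff_mul_paramDeriv_eq_one [FiniteDimensional ℝ X] [FiniteDimensional ℝ Z]
    {q : X → Z → ℂ} (hq : ContDiff ℝ 2 (uncurry q)) {v x₀ : X} {z₀ : Z}
    (hv : paramDeriv q v x₀ z₀ ≠ 0) :
    ∃ h : X → Z → ℂ, ContDiff ℝ 1 (uncurry h) ∧
      ∀ᶠ p in 𝓝 (x₀, z₀), h p.1 p.2 * paramDeriv q v p.1 p.2 = 1 := by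
  have hderiv : ContDiff ℝ 1 (uncurry (paramDeriv q v)) :=
    contDiff_paramDeriv hq one_add_one_eq_two.le v
  obtain ⟨g, hg, hginv⟩ := exists_contDiff_eventuallyEq (n := 1) (contDiffAt_inv ℝ hv)
  refine ⟨fun x z => g (paramDeriv q v x z), hg.comp hderiv, ?_⟩
  have hlim : Tendsto (uncurry (paramDeriv q v)) (𝓝 (x₀, z₀)) (𝓝 (paramDeriv q v x₀ z₀)) :=
    hderiv.continuous.tendsto _
  filter_upwards [hlim.eventually hginv, hlim.eventually_ne hv] with p hp hne
  exact (congrArg (· * _) hp).trans (inv_mul_cancel₀ hne)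

end ParamDeriv

variable {Y Z : Type*} [NormedAddCommGroup Y] [NormedSpace ℝ Y] [FiniteDimensional ℝ Y]
  [MeasurableSpace Y] [BorelSpace Y] [Nontrivial Y] {μ : Measure Y} [μ.IsAddHaarMeasure]
  [NormedAddCommGroup Z] [NormedSpace ℝ Z] [FiniteDimensional ℝ Z] {q : ℝ × Y → Z → ℂ}
  {ζ : Z → Y} {S : Set Z} {c : ℝ} {n : ℕ}

lemma continuousOn_setIntegral_prod_mul_inv {k : ℝ × Y → Z → ℂ} {I : Set ℝ} {B : Set Y} {Q : Set Z}
    (hI : IsCompact I) (hB : IsCompact B) (hQ : IsCompact Q) (hk : Continuous (uncurry k))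
    (hq : Continuous (uncurry q)) {m : ℝ} (hm : 0 < m) (hc : 0 < c) (hSQ : S ⊆ Q)
    (htransverse : ∀ z ∈ S, ∀ y ∈ B, ∀ t ∈ I, ∀ t' ∈ I,
      m * dist t t' ≤ ‖q (t, y) z - q (t', y) z‖)
    (hlower : ∀ z ∈ S, ∀ x ∈ I ×ˢ B, c * ‖x.2 - ζ z‖ ^ n ≤ ‖q x z‖) :
    ContinuousOn (fun z => ∫ x in I ×ˢ B, k x z * (q x z)⁻¹ ∂(volume.prod μ)) S := by
  have hIB : IsCompact (I ×ˢ B) := hI.prod hB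
  obtain ⟨b, hb⟩ := (hIB.prod hQ).exists_bound_of_continuousOn hk.continuousOn
  let δ : ℝ := 1 / (2 * n + 2)
  have hδ : 0 < δ := by positivity
  have hδ1 : δ ≤ 1 := (div_le_one (by positivity)).2 (by linarith [n.cast_nonneg (α := ℝ)])
  have hnδ : n * (2 * δ) < finrank ℝ Y := by
    have hdim : (1 : ℝ) ≤ finrank ℝ Y := Nat.one_le_cast.2 finrank_pos
    refine lt_of_lt_of_le ?_ hdim
    rw [show (n : ℝ) * (2 * δ) = n / (n + 1) by simp only [δ]; field_simp,
      div_lt_one (by positivity)]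
    exact lt_add_one _
  obtain ⟨C, hC, hbound⟩ := exists_forall_lintegral_prod_inv_enorm_rpow_le (F := ℂ) (s := 1 - δ)
    (s' := 2 * δ) (volume : Measure ℝ) μ hI hB hm hc (by linarith) (by simpa using hδ)
    (by positivity) hnδ
  refine continuousOn_integral_mul_inv (B := ENNReal.ofReal b) (C := C) hIB hIB.measurableSet hk hq
    ENNReal.ofReal_ne_top (fun z hz x hx => ?_) hδ hC fun z hz => ?_
  · rw [← ofReal_norm]
    exact ENNReal.ofReal_le_ofReal (hb (x, z) ⟨hx, hSQ hz⟩)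
  · have := hbound (ζ z) (fun x => q x z) (hq.comp (.prodMk_left z)) (htransverse z hz)
      fun y hy t ht => hlower z hz (t, y) ⟨ht, hy⟩
    rwa [show 1 - δ + 2 * δ = 1 + δ by ring] at this

lemma continuousOn_setIntegral_closedBall_mul_inv {k : ℝ × Y → Z → ℂ} {Q : Set Z} {x₀ : ℝ × Y}
    {r : ℝ} {a : ℂ} (hQ : IsCompact Q) (hk : Continuous (uncurry k))
    (hq : ContDiff ℝ 1 (uncurry q)) (ha : a ≠ 0) (hc : 0 < c) (hSQ : S ⊆ Q)
    (hderiv : ∀ z ∈ S, ∀ x ∈ Metric.closedBall x₀ r, ‖paramDeriv q (1, 0) x z - a‖ ≤ ‖a‖ / 2)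
    (hlower : ∀ z ∈ S, ∀ x ∈ Metric.closedBall x₀ r, c * ‖x.2 - ζ z‖ ^ n ≤ ‖q x z‖) :
    ContinuousOn (fun z => ∫ x in Metric.closedBall x₀ r, k x z * (q x z)⁻¹ ∂(volume.prod μ))
      S := by
  rw [← Prod.mk.eta (p := x₀), ← closedBall_prod_same] at hderiv hlower ⊢
  refine continuousOn_setIntegral_prod_mul_inv (ζ := ζ) (isCompact_closedBall _ _)
    (isCompact_closedBall _ _) hQ hk hq.continuous (half_pos (norm_pos_iff.2 ha)) hc hSQ
    (fun z hz y hy t ht t' ht' => ?_) hlower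
  simpa only [sub_half] using mul_dist_le_norm_sub_of_norm_deriv_sub_le (convex_closedBall _ _)
    (fun t _ => hasDerivAt_paramDeriv (hq.differentiable one_ne_zero) t y z)
    (fun t ht => hderiv z hz _ (mk_mem_prod ht hy)) ht ht'

theorem exists_forall_tendsto_integral_div_sq {U : Set Z} (hq : ContDiff ℝ 2 (uncurry q))
    {x₀ : ℝ × Y} {z₀ : Z} (hv : paramDeriv q (1, 0) x₀ z₀ ≠ 0) (hz₀ : z₀ ∈ S) (hUS : U ⊆ S)
    (hc : 0 < c) (hlower : ∀ᶠ x in 𝓝 x₀, ∀ z ∈ S, c * ‖x.2 - ζ z‖ ^ n ≤ ‖q x z‖)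
    (hne : ∀ᶠ x in 𝓝 x₀, ∀ z ∈ U, q x z ≠ 0) :
    ∃ r > 0, ∀ g : ℝ × Y → ℂ, ContDiff ℝ 1 g → (∀ x ∉ Metric.closedBall x₀ r, g x = 0) →
      ∃ l, Tendsto (fun z => ∫ x, g x / q x z ^ 2 ∂(volume.prod μ)) (𝓝[U] z₀) (𝓝 l) := by
  set a := paramDeriv q (1, 0) x₀ z₀
  obtain ⟨h, hh, hinv⟩ := exists_contDiff_mul_paramDeriv_eq_one hq hv
  have hclose : ∀ᶠ p in 𝓝 (x₀, z₀), ‖paramDeriv q (1, 0) p.1 p.2 - a‖ ≤ ‖a‖ / 2 := by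
    have hderiv := contDiff_paramDeriv hq one_add_one_eq_two.le (1, 0)
    filter_upwards [(hderiv.continuous.tendsto (x₀, z₀)).eventually
      (Metric.closedBall_mem_nhds a (half_pos (norm_pos_iff.2 hv)))] with p hp
    exact mem_closedBall_iff_norm.1 hp
  obtain ⟨r, hr, hball⟩ := Metric.nhds_basis_closedBall.mem_iff.1
    ((hinv.and hclose).and ((hlower.and hne).prod_inl_nhds z₀))
  have hmem : ∀ {x z}, x ∈ Metric.closedBall x₀ r → z ∈ Metric.closedBall z₀ r → _ :=
    fun {x z} hx hz => hball (closedBall_prod_same x₀ z₀ r ▸ mk_mem_prod hx hz)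
  refine ⟨r, hr, fun g hg hg0 => ?_⟩
  let P : ℝ × Y → Z → ℂ := fun x z => g x * h x z
  have hP : ContDiff ℝ 1 (uncurry P) := (hg.comp contDiff_fst).mul hh
  have hcont : ContinuousOn (fun z => ∫ x in Metric.closedBall x₀ r,
      paramDeriv P (1, 0) x z * (q x z)⁻¹ ∂(volume.prod μ)) (S ∩ Metric.closedBall z₀ r) :=
    continuousOn_setIntegral_closedBall_mul_inv (isCompact_closedBall z₀ r)
      (contDiff_paramDeriv hP (zero_add 1).le _).continuous (hq.of_le one_le_two) hv hc
      inter_subset_right (fun z hz x hx => (hmem hx hz.2).1.2)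
      fun z hz x hx => (hmem hx hz.2).2.1 z hz.1
  have hz₀' : z₀ ∈ S ∩ Metric.closedBall z₀ r := ⟨hz₀, Metric.mem_closedBall_self hr.le⟩
  have hnear : ∀ᶠ z in 𝓝[U] z₀, z ∈ U ∧ z ∈ Metric.closedBall z₀ r :=
    inter_mem self_mem_nhdsWithin (nhdsWithin_le_nhds (Metric.closedBall_mem_nhds z₀ hr))
  refine ⟨_, ((hcont z₀ hz₀').mono_left (nhdsWithin_le_of_mem ?_)).congr' ?_⟩
  · filter_upwards [hnear] with z hz using ⟨hUS hz.1, hz.2⟩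
  · filter_upwards [hnear] with z ⟨hzU, hz⟩
    have hslice : ContDiff ℝ 2 fun x : ℝ × Y => (x, z) := contDiff_id.prodMk contDiff_const
    exact (integral_div_sq_eq_setIntegral _ (isCompact_closedBall x₀ r) hg
      (hh.comp (hslice.of_le one_le_two)) ((hq.comp hslice).of_le one_le_two) hg0
      (fun x hx => (hmem hx hz).2.2 z hzU) fun x hx => (hmem hx hz).1.1).symm

end LocalLimit

section LevelSetChart

variable {V X : Type*} [NormedAddCommGroup V] [NormedSpace ℝ V] [NormedAddCommGroup X]
  [NormedSpace ℝ X]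

lemma exists_contDiff_graph_levelSet [CompleteSpace X] [HasContDiffBump X] {f : X × ℝ → ℝ}
    {u : X × ℝ} {n : ℕ} (hf : ContDiffAt ℝ n f u) (hn : n ≠ 0) (hu : fderiv ℝ f u (0, 1) ≠ 0) :
    ∃ g : X → ℝ, ContDiff ℝ n g ∧ ∀ᶠ p in 𝓝 u, f p = f u ↔ g p.1 = p.2 := by
  have hn' : (n : WithTop ℕ∞) ≠ 0 := by exact_mod_cast hn
  have hinvertible : (fderiv ℝ f u ∘L .inr ℝ X ℝ).IsInvertible :=
    ⟨.unitsEquivAut ℝ (.mk0 _ hu), by ext; simp⟩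
  obtain ⟨g, hg, hgeq⟩ :=
    exists_contDiff_eventuallyEq (hf.contDiffAt_implicitFunction hn' hinvertible)
  refine ⟨g, hg, ?_⟩
  filter_upwards [hf.eventually_apply_eq_iff_implicitFunction hn' hinvertible,
    continuous_fst.continuousAt.eventually hgeq] with p hp hgp
  rw [hp, hgp]

lemma exists_equiv_prod_ker [FiniteDimensional ℝ V] {ℓ : V →L[ℝ] ℂ} (hℓ : Surjective ℓ) :
    ∃ e : V ≃L[ℝ] (ℝ × ℓ.ker) × ℝ, ∀ w, (e w).1.1 = (ℓ w).im ∧ (e w).2 = (ℓ w).re := by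
  obtain ⟨ℓ', hℓ'⟩ := ℓ.exists_rightInverse_of_surjective (LinearMap.range_eq_top.2 hℓ)
  let e₁ : V ≃L[ℝ] ℂ × ℓ.ker :=
    .equivOfRightInverse ℓ ℓ' fun ζ => DFunLike.congr_fun hℓ' ζ
  let e₂ : (ℂ × ℓ.ker) ≃L[ℝ] (ℝ × ℝ) × ℓ.ker := Complex.equivRealProdCLM.prodCongr (.refl ℝ _)
  let e₃ : ((ℝ × ℝ) × ℓ.ker) ≃L[ℝ] (ℝ × ℓ.ker) × ℝ :=
    (ContinuousLinearEquiv.prodAssoc ℝ ℝ ℝ ℓ.ker).trans (.prodComm ℝ _ _)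
  exact ⟨(e₁.trans e₂).trans e₃, fun w => ⟨rfl, rfl⟩⟩

theorem exists_levelSet_chart [FiniteDimensional ℝ V] {ρ : V → ℝ} {ℓ : V →L[ℝ] ℂ} {z₀ : V} {n : ℕ}
    (hρ : ContDiffAt ℝ n ρ z₀) (hn : n ≠ 0) (hℓ : Surjective ℓ)
    (hρ' : ∀ v, ℓ v = 1 → fderiv ℝ ρ z₀ v ≠ 0) :
    ∃ (π : V →L[ℝ] ℝ × ℓ.ker) (φ : ℝ × ℓ.ker → V), (∀ w, (π w).1 = (ℓ w).im) ∧
      ContDiff ℝ n φ ∧ LeftInverse π φ ∧ ∀ᶠ w in 𝓝 z₀, ρ w = ρ z₀ ↔ φ (π w) = w := by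
  obtain ⟨e, he⟩ := exists_equiv_prod_ker hℓ
  have hnormal : ℓ (e.symm (0, 1)) = 1 := by
    have := he (e.symm (0, 1))
    rw [e.apply_symm_apply] at this
    exact Complex.ext this.2.symm this.1.symm
  have hρe : ContDiffAt ℝ n (ρ ∘ e.symm) (e z₀) := by
    refine ContDiffAt.comp _ ?_ e.symm.contDiff.contDiffAt
    rwa [e.symm_apply_apply]
  obtain ⟨g, hg, hgρ⟩ := exists_contDiff_graph_levelSet hρe hn (by
    rw [e.symm.comp_right_fderiv, e.symm_apply_apply]
    exact hρ' _ hnormal)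
  refine ⟨.fst ℝ (ℝ × ℓ.ker) ℝ ∘L (e : V →L[ℝ] (ℝ × ℓ.ker) × ℝ), fun x => e.symm (x, g x),
    fun w => (he w).1, e.symm.contDiff.comp (contDiff_id.prodMk hg), fun x => by simp, ?_⟩
  filter_upwards [e.continuous.continuousAt.eventually hgρ] with w hw
  simpa [e.symm_apply_eq, Prod.ext_iff] using hw

end LevelSetChart

section Transfer

lemma setIntegral_eq_integral_smul_comp {X V E : Type*} [MeasurableSpace X] [MeasurableSpace V]
    [NormedAddCommGroup E] [NormedSpace ℝ E] {μ : Measure X} {ν : Measure V} {φ : X → V}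
    {J : X → ℝ} {A N : Set V} {G : V → E} (hφ : MeasurableEmbedding φ) (hJ : Measurable J)
    (hJ₀ : ∀ x, 0 ≤ J x) (hν : ν.comap φ = μ.withDensity fun x => ENNReal.ofReal (J x))
    (hA : MeasurableSet A) (hAN : A ∩ N = range φ ∩ N) (hG : ∀ w ∉ N, G w = 0) :
    ∫ w in A, G w ∂ν = ∫ x, J x • G (φ x) ∂μ :=
  calc ∫ w in A, G w ∂ν
    _ = ∫ w in A ∩ N, G w ∂ν :=
        setIntegral_eq_of_subset_of_forall_sdiff_eq_zero hA inter_subset_left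
          fun w hw => hG w fun hN => hw.2 ⟨hw.1, hN⟩
    _ = ∫ w in range φ, G w ∂ν := by
        rw [hAN]
        exact (setIntegral_eq_of_subset_of_forall_sdiff_eq_zero hφ.measurableSet_range
          inter_subset_left fun w hw => hG w fun hN => hw.2 ⟨hw.1, hN⟩).symm
    _ = ∫ x, G (φ x) ∂(μ.withDensity fun x => ENNReal.ofReal (J x)) := by
        rw [← hφ.map_comap, hφ.integral_map, hν]
    _ = ∫ x, J x • G (φ x) ∂μ := by
        rw [integral_withDensity_eq_integral_toReal_smul hJ.ennreal_ofReal (by simp)]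
        simp_rw [ENNReal.toReal_ofReal (hJ₀ _)]

lemma measure_lt_top_of_subset_image {X V : Type*} [TopologicalSpace X] [MeasurableSpace X]
    [MeasurableSpace V] {μ : Measure X} [IsFiniteMeasureOnCompacts μ] {ν : Measure V} {φ : X → V}
    {J : X → ℝ} {A : Set V} {K : Set X} (hφ : MeasurableEmbedding φ) (hJ : Continuous J)
    (hν : ν.comap φ = μ.withDensity fun x => ENNReal.ofReal (J x)) (hK : IsCompact K)
    (hKm : MeasurableSet K) (hA : A ⊆ φ '' K) : ν A < ∞ := by
  obtain ⟨b, hb⟩ := hK.exists_bound_of_continuousOn hJ.continuousOn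
  calc ν A ≤ ν (φ '' K) := measure_mono hA
    _ = ∫⁻ x in K, ENNReal.ofReal (J x) ∂μ := by
        rw [← hφ.comap_apply, hν, withDensity_apply _ hKm]
    _ ≤ ENNReal.ofReal b * μ K := by
        rw [← setLIntegral_const]
        exact setLIntegral_mono' hKm fun x hx =>
          ENNReal.ofReal_le_ofReal ((Real.le_norm_self _).trans (hb x hx))
    _ < ∞ := ENNReal.mul_lt_top ENNReal.ofReal_lt_top hK.measure_lt_top

lemma leftInverse_fderiv {X V : Type*} [NormedAddCommGroup X] [NormedSpace ℝ X]
    [NormedAddCommGroup V] [NormedSpace ℝ V] {π : V →L[ℝ] X} {φ : X → V} (h : LeftInverse π φ)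
    {x : X} (hφ : DifferentiableAt ℝ φ x) : LeftInverse π (fderiv ℝ φ x) := fun v => by
  have hid : HasFDerivAt (fun x => π (φ x)) (.id ℝ X) x := by
    simp only [h _]
    exact hasFDerivAt_id x
  exact DFunLike.congr_fun ((π.hasFDerivAt.comp x hφ.hasFDerivAt).unique hid) v

lemma finrank_ker_add_two {V : Type*} [NormedAddCommGroup V] [NormedSpace ℝ V]
    [FiniteDimensional ℝ V] {ℓ : V →L[ℝ] ℂ} (hℓ : Surjective ℓ) :
    finrank ℝ ℓ.ker + 2 = finrank ℝ V := by
  have hrank := ℓ.toLinearMap.finrank_range_add_finrank_ker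
  rw [LinearMap.range_eq_top.2 hℓ, finrank_top, Complex.finrank_real_complex] at hrank
  rw [← hrank, add_comm]

end Transfer

section LerayDenominator

variable {V : Type*} [NormedAddCommGroup V] [NormedSpace ℝ V]

/-- `Δ` is a Leray denominator of finite type for the compact hypersurface `{ρ = 0}`. The form `ℓ`
plays the role of `∂ρ(w)`: it is both half the complexification of `dρ(w)` and the differential of
`Δ(·, w)` at `w`. -/
structure IsLerayDenominator (ρ : V → ℝ) (Δ : V → V → ℂ) : Prop where
  contDiff_rho : ContDiff ℝ 2 ρ
  contDiff_delta : ContDiff ℝ 2 (uncurry Δ)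
  isCompact_zeroSet : IsCompact {w | ρ w = 0}
  exists_hasFDerivAt : ∀ w, ρ w = 0 → ∃ ℓ : V →L[ℝ] ℂ, Surjective ℓ ∧
    HasFDerivAt ρ ((2 : ℝ) • reCLM ∘L ℓ) w ∧ HasFDerivAt (fun w' => Δ w' w) ℓ w
  exists_mul_pow_le_norm : ∃ c > 0, ∃ n : ℕ, ∀ w z, ρ w = 0 → ρ z ≤ 0 →
    c * ‖w - z‖ ^ n ≤ ‖Δ w z‖

variable {ρ : V → ℝ} {Δ : V → V → ℂ} {f : V → ℂ} {z₀ : V}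

namespace IsLerayDenominator

lemma delta_ne_zero (h : IsLerayDenominator ρ Δ) {w z : V} (hw : ρ w = 0) (hz : ρ z ≤ 0)
    (hwz : w ≠ z) : Δ w z ≠ 0 := by
  obtain ⟨c, hc, n, hlower⟩ := h.exists_mul_pow_le_norm
  have hpos : 0 < c * ‖w - z‖ ^ n := mul_pos hc (pow_pos (norm_sub_pos_iff.2 hwz) n)
  exact norm_pos_iff.1 (hpos.trans_le (hlower w z hw hz))

lemma eventually_eq_zero_imp_of_neg (h : IsLerayDenominator ρ Δ) (hz₀ : ρ z₀ < 0) :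
    ∀ᶠ w in 𝓝 z₀, ρ w = 0 → f w = 0 :=
  (h.contDiff_rho.continuous.continuousAt.eventually_ne hz₀.ne).mono fun _ hne heq =>
    absurd heq hne

lemma exists_eventually_norm_div_sq_le (h : IsLerayDenominator ρ Δ) (hf : Continuous f)
    (hf₀ : ∀ᶠ w in 𝓝 z₀, ρ w = 0 → f w = 0) :
    ∃ B, ∀ᶠ z in 𝓝 z₀, ρ z ≤ 0 → ∀ w, ρ w = 0 → ‖f w / Δ w z ^ 2‖ ≤ B := by
  obtain ⟨c, hc, n, hlower⟩ := h.exists_mul_pow_le_norm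
  obtain ⟨b, hb⟩ := h.isCompact_zeroSet.exists_bound_of_continuousOn hf.continuousOn
  obtain ⟨δ, hδ, hball⟩ := Metric.mem_nhds_iff.1 hf₀
  refine ⟨|b| / (c * (δ / 2) ^ n) ^ 2, ?_⟩
  filter_upwards [Metric.ball_mem_nhds z₀ (half_pos hδ)] with z hz hρz w hw
  by_cases hwz : w ∈ Metric.ball z₀ δ
  · rw [hball hwz hw, zero_div, norm_zero]
    positivity
  · have hdist : δ / 2 ≤ ‖w - z‖ := by
      rw [← dist_eq_norm]
      linarith [dist_triangle w z z₀, not_lt.1 (mt Metric.mem_ball.2 hwz), Metric.mem_ball.1 hz]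
    rw [norm_div, norm_pow]
    gcongr
    · exact (hb w hw).trans (le_abs_self b)
    · exact le_trans (by gcongr) (hlower w z hw hρz)

lemma measurable_div_sq [MeasurableSpace V] [BorelSpace V] (h : IsLerayDenominator ρ Δ)
    (hf : Continuous f) (z : V) : Measurable fun w => f w / Δ w z ^ 2 :=
  hf.measurable.div ((h.contDiff_delta.continuous.comp (.prodMk_left z)).measurable.pow_const 2)

end IsLerayDenominator

end LerayDenominator

section BoundaryChart

variable {V : Type*} [NormedAddCommGroup V] [InnerProductSpace ℝ V] [FiniteDimensional ℝ V]
  [MeasurableSpace V] [BorelSpace V] {ρ : V → ℝ} {Δ : V → V → ℂ} {d : ℕ} {z₀ : V}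

/-- A parametrization `param` of `{ρ = 0}` near `z₀` by `ℝ × directions`, inverse to the linear
projection `proj` and with Jacobian `jacobian` for the `d`-dimensional Hausdorff measure, such
that `Δ(·, z₀)` has a nonzero derivative along the `ℝ` factor. -/
structure BoundaryChart (ρ : V → ℝ) (Δ : V → V → ℂ) (d : ℕ) (z₀ : V) where
  directions : Submodule ℝ V
  nontrivial_directions : Nontrivial directions
  proj : V →L[ℝ] ℝ × directions
  param : ℝ × directions → V
  jacobian : ℝ × directions → ℝ
  contDiff_param : ContDiff ℝ 2 param
  leftInverse : LeftInverse proj param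
  param_proj : param (proj z₀) = z₀
  eventually_eq_zero_iff : ∀ᶠ w in 𝓝 z₀, ρ w = 0 ↔ param (proj w) = w
  contDiff_jacobian : ContDiff ℝ 1 jacobian
  jacobian_nonneg : ∀ x, 0 ≤ jacobian x
  comap_hausdorffMeasure : (μH[d] : Measure V).comap param =
    (volume.prod volume).withDensity fun x => ENNReal.ofReal (jacobian x)
  paramDeriv_ne_zero : paramDeriv (fun x z => Δ (param x) z) (1, 0) (proj z₀) z₀ ≠ 0

lemma IsLerayDenominator.nonempty_boundaryChart (h : IsLerayDenominator ρ Δ)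
    (hV : finrank ℝ V = d + 1) (hd : 2 ≤ d) (hz₀ : ρ z₀ = 0) :
    Nonempty (BoundaryChart ρ Δ d z₀) := by
  obtain ⟨ℓ, hℓ, hρℓ, hΔℓ⟩ := h.exists_hasFDerivAt z₀ hz₀
  obtain ⟨π, φ, hπℓ, hφ, hπφ, hlevel⟩ := exists_levelSet_chart (n := 2) (z₀ := z₀)
    h.contDiff_rho.contDiffAt two_ne_zero hℓ fun v hv => by simp [hρℓ.fderiv, hv]
  have hker := finrank_ker_add_two hℓ
  have hnontrivial : Nontrivial ℓ.ker := nontrivial_of_finrank_pos (R := ℝ) (by omega)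
  have hrank : finrank ℝ (ℝ × ℓ.ker) = d := by
    rw [finrank_prod, finrank_self]
    omega
  have hφ₀ : φ (π z₀) = z₀ := hlevel.self_of_nhds.1 rfl
  have hdφ : ∀ x, LeftInverse π (fderiv ℝ φ x) := fun x =>
    leftInverse_fderiv hπφ (hφ.differentiable two_ne_zero x)
  obtain ⟨J, hJ, hJ₀, hcomap⟩ := exists_contDiff_comap_hausdorffMeasure_eq_withDensity (n := 1)
    (volume.prod volume : Measure (ℝ × ℓ.ker)) hφ
    (hπφ.isClosedEmbedding π.continuous hφ.continuous).measurableEmbedding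
    fun x => (hdφ x).injective
  rw [hrank] at hcomap
  refine ⟨⟨ℓ.ker, hnontrivial, π, φ, J, hφ, hπφ, hφ₀, by simpa only [hz₀] using hlevel, hJ, hJ₀,
    hcomap, fun hzero => ?_⟩⟩
  have hchain : paramDeriv (fun x z => Δ (φ x) z) (1, 0) (π z₀) z₀ =
      ℓ (fderiv ℝ φ (π z₀) (1, 0)) := by
    rw [← hφ₀] at hΔℓ
    have hcomp := hΔℓ.comp (π z₀) (hφ.differentiable two_ne_zero _).hasFDerivAt
    rw [hφ₀] at hcomp
    exact DFunLike.congr_fun hcomp.fderiv _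
  have him := hπℓ (fderiv ℝ φ (π z₀) (1, 0))
  rw [hdφ, ← hchain, hzero] at him
  exact one_ne_zero him

namespace BoundaryChart

lemma measurableEmbedding_param (κ : BoundaryChart ρ Δ d z₀) :
    MeasurableEmbedding κ.param :=
  (κ.leftInverse.isClosedEmbedding κ.proj.continuous
    κ.contDiff_param.continuous).measurableEmbedding

lemma norm_sub_proj_le (κ : BoundaryChart ρ Δ d z₀)
    (x : ℝ × κ.directions) (z : V) : ‖x - κ.proj z‖ ≤ ‖κ.proj‖ * ‖κ.param x - z‖ := by
  simpa only [map_sub, κ.leftInverse x] using κ.proj.le_opNorm (κ.param x - z)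

lemma tendsto_param (κ : BoundaryChart ρ Δ d z₀) :
    Tendsto κ.param (𝓝 (κ.proj z₀)) (𝓝 z₀) := by
  simpa only [κ.param_proj] using κ.contDiff_param.continuous.tendsto (κ.proj z₀)

lemma eventually_rho_param (κ : BoundaryChart ρ Δ d z₀) :
    ∀ᶠ x in 𝓝 (κ.proj z₀), ρ (κ.param x) = 0 := by
  filter_upwards [κ.tendsto_param.eventually κ.eventually_eq_zero_iff] with x hx
  rw [hx, κ.leftInverse]

lemma exists_mem_nhdsWithin_measure_lt_top (κ : BoundaryChart ρ Δ d z₀) :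
    ∃ s ∈ 𝓝[{w | ρ w = 0}] z₀, μH[d] s < ∞ := by
  let K := Metric.closedBall (κ.proj z₀) 1
  refine ⟨κ.param '' K, ?_, measure_lt_top_of_subset_image κ.measurableEmbedding_param
    κ.contDiff_jacobian.continuous κ.comap_hausdorffMeasure (isCompact_closedBall _ _)
    Metric.isClosed_closedBall.measurableSet subset_rfl⟩
  filter_upwards [self_mem_nhdsWithin, nhdsWithin_le_nhds κ.eventually_eq_zero_iff,
    nhdsWithin_le_nhds (κ.proj.continuous.continuousAt.preimage_mem_nhds
      (Metric.closedBall_mem_nhds _ one_pos))] with w hw hiff hK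
  exact ⟨κ.proj w, hK, hiff.1 hw⟩

lemma exists_eventually_mul_norm_pow_le (κ : BoundaryChart ρ Δ d z₀)
    (h : IsLerayDenominator ρ Δ) :
    ∃ c > 0, ∃ n : ℕ, ∀ᶠ x in 𝓝 (κ.proj z₀), ∀ z ∈ {z | ρ z ≤ 0},
      c * ‖x.2 - (κ.proj z).2‖ ^ n ≤ ‖Δ (κ.param x) z‖ := by
  obtain ⟨c, hc, n, hlower⟩ := h.exists_mul_pow_le_norm
  refine ⟨c / (‖κ.proj‖ + 1) ^ n, by positivity, n, ?_⟩
  filter_upwards [κ.eventually_rho_param] with x hx z hz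
  have hproj : ‖x.2 - (κ.proj z).2‖ ≤ (‖κ.proj‖ + 1) * ‖κ.param x - z‖ :=
    calc ‖x.2 - (κ.proj z).2‖
      _ ≤ ‖x - κ.proj z‖ := norm_snd_le (x - κ.proj z)
      _ ≤ ‖κ.proj‖ * ‖κ.param x - z‖ := κ.norm_sub_proj_le x z
      _ ≤ (‖κ.proj‖ + 1) * ‖κ.param x - z‖ := by gcongr; linarith
  calc c / (‖κ.proj‖ + 1) ^ n * ‖x.2 - (κ.proj z).2‖ ^ n
    _ ≤ c / (‖κ.proj‖ + 1) ^ n * ((‖κ.proj‖ + 1) * ‖κ.param x - z‖) ^ n := by gcongr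
    _ = c * ‖κ.param x - z‖ ^ n := by rw [mul_pow]; field_simp
    _ ≤ ‖Δ (κ.param x) z‖ := hlower _ _ hx hz

lemma exists_forall_tendsto_integral_param (κ : BoundaryChart ρ Δ d z₀)
    (h : IsLerayDenominator ρ Δ) :
    ∃ r > 0, ∀ g : ℝ × κ.directions → ℂ, ContDiff ℝ 1 g →
      (∀ x ∉ Metric.closedBall (κ.proj z₀) r, g x = 0) →
      ∃ l, Tendsto (fun z => ∫ x, g x / Δ (κ.param x) z ^ 2 ∂(volume.prod volume))
        (𝓝[{z | ρ z < 0}] z₀) (𝓝 l) := by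
  have := κ.nontrivial_directions
  obtain ⟨c, hc, n, hlower⟩ := κ.exists_eventually_mul_norm_pow_le h
  have hq : ContDiff ℝ 2 (uncurry fun x z => Δ (κ.param x) z) :=
    h.contDiff_delta.comp ((κ.contDiff_param.comp contDiff_fst).prodMk contDiff_snd)
  refine exists_forall_tendsto_integral_div_sq hq κ.paramDeriv_ne_zero
    (S := {z | ρ z ≤ 0}) (U := {z | ρ z < 0}) (ζ := fun z => (κ.proj z).2)
    (κ.eventually_eq_zero_iff.self_of_nhds.2 κ.param_proj).le (fun z => le_of_lt (a := ρ z))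
    hc hlower ?_
  filter_upwards [κ.eventually_rho_param] with x hx z hz
  exact h.delta_ne_zero hx (le_of_lt hz) fun heq => hz.ne (heq ▸ hx)

lemma setIntegral_eq (κ : BoundaryChart ρ Δ d z₀)
    (h : IsLerayDenominator ρ Δ) {N : Set V} {G : V → ℂ}
    (hN : ∀ w ∈ N, ρ w = 0 ↔ κ.param (κ.proj w) = w) (hG : ∀ w ∉ N, G w = 0) :
    ∫ w in {w | ρ w = 0}, G w ∂μH[d] =
      ∫ x, κ.jacobian x • G (κ.param x) ∂(volume.prod volume) := by
  refine setIntegral_eq_integral_smul_comp κ.measurableEmbedding_param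
    κ.contDiff_jacobian.continuous.measurable κ.jacobian_nonneg κ.comap_hausdorffMeasure
    h.isCompact_zeroSet.measurableSet ?_ hG
  ext w
  refine and_congr_left fun hw => (hN w hw).trans ⟨fun hw' => ⟨_, hw'⟩, ?_⟩
  rintro ⟨x, rfl⟩
  rw [κ.leftInverse]

lemma exists_forall_tendsto_setIntegral_div_sq (κ : BoundaryChart ρ Δ d z₀)
    (h : IsLerayDenominator ρ Δ) :
    ∃ δ > 0, ∀ f : V → ℂ, ContDiff ℝ 1 f → (∀ w ∉ Metric.ball z₀ δ, f w = 0) →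
      ∃ l, Tendsto (fun z => ∫ w in {w | ρ w = 0}, f w / Δ w z ^ 2 ∂μH[d])
        (𝓝[{z | ρ z < 0}] z₀) (𝓝 l) := by
  obtain ⟨r, hr, hlimit⟩ := κ.exists_forall_tendsto_integral_param h
  obtain ⟨δ, hδ, hball⟩ := Metric.mem_nhds_iff.1 (inter_mem κ.eventually_eq_zero_iff
    (κ.proj.continuous.continuousAt.preimage_mem_nhds (Metric.closedBall_mem_nhds _ hr)))
  refine ⟨δ, hδ, fun f hf hf₀ => ?_⟩
  let g : ℝ × κ.directions → ℂ := fun x => κ.jacobian x • f (κ.param x)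
  have hg : ContDiff ℝ 1 g :=
    κ.contDiff_jacobian.smul (hf.comp (κ.contDiff_param.of_le one_le_two))
  have hg₀ : ∀ x ∉ Metric.closedBall (κ.proj z₀) r, g x = 0 := fun x hx => by
    have hfar : κ.param x ∉ Metric.ball z₀ δ := fun hmem =>
      hx (κ.leftInverse x ▸ (hball hmem).2)
    simp only [g, hf₀ _ hfar, smul_zero]
  obtain ⟨l, hl⟩ := hlimit g hg hg₀
  refine ⟨l, hl.congr fun z => ?_⟩
  rw [κ.setIntegral_eq h (fun w hw => (hball hw).1) fun w hw => by rw [hf₀ w hw, zero_div]]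
  simp only [g, smul_div_assoc]

end BoundaryChart

namespace IsLerayDenominator

lemma hausdorffMeasure_zeroSet_lt_top (h : IsLerayDenominator ρ Δ) (hV : finrank ℝ V = d + 1)
    (hd : 2 ≤ d) : μH[d] {w | ρ w = 0} < ∞ :=
  h.isCompact_zeroSet.measure_lt_top_of_nhdsWithin fun _ hz =>
    let ⟨κ⟩ := h.nonempty_boundaryChart hV hd hz
    κ.exists_mem_nhdsWithin_measure_lt_top

variable {f : V → ℂ}

lemma integrableOn_div_sq (h : IsLerayDenominator ρ Δ) (hV : finrank ℝ V = d + 1) (hd : 2 ≤ d)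
    (hf : Continuous f) (hz₀ : ρ z₀ < 0) :
    IntegrableOn (fun w => f w / Δ w z₀ ^ 2) {w | ρ w = 0} μH[d] := by
  obtain ⟨B, hB⟩ :=
    h.exists_eventually_norm_div_sq_le hf (h.eventually_eq_zero_imp_of_neg hz₀)
  exact .of_bound (h.hausdorffMeasure_zeroSet_lt_top hV hd)
    (h.measurable_div_sq hf z₀).aestronglyMeasurable B
    ((ae_restrict_mem h.isCompact_zeroSet.measurableSet).mono (hB.self_of_nhds hz₀.le))

lemma tendsto_setIntegral_div_sq (h : IsLerayDenominator ρ Δ) (hV : finrank ℝ V = d + 1)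
    (hd : 2 ≤ d) (hf : Continuous f) (hz₀ : ρ z₀ ≤ 0) (hf₀ : ∀ᶠ w in 𝓝 z₀, ρ w = 0 → f w = 0) :
    Tendsto (fun z => ∫ w in {w | ρ w = 0}, f w / Δ w z ^ 2 ∂μH[d]) (𝓝[{z | ρ z < 0}] z₀)
      (𝓝 (∫ w in {w | ρ w = 0}, f w / Δ w z₀ ^ 2 ∂μH[d])) := by
  have hmem := ae_restrict_mem (μ := μH[d]) h.isCompact_zeroSet.measurableSet
  obtain ⟨B, hB⟩ := h.exists_eventually_norm_div_sq_le hf hf₀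
  refine tendsto_integral_filter_of_dominated_convergence (fun _ => B)
    (.of_forall fun z => (h.measurable_div_sq hf z).aestronglyMeasurable) ?_
    (integrableOn_const (h.hausdorffMeasure_zeroSet_lt_top hV hd).ne) (hmem.mono fun w hw => ?_)
  · filter_upwards [self_mem_nhdsWithin, nhdsWithin_le_nhds hB] with z hz hBz
    exact hmem.mono (hBz (le_of_lt hz))
  · by_cases hfw : f w = 0
    · simp only [hfw, zero_div, tendsto_const_nhds]
    · have hwz : w ≠ z₀ := by
        rintro rfl
        exact hfw (hf₀.self_of_nhds hw)
      have hne := h.delta_ne_zero hw hz₀ hwz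
      have hΔ : Continuous (Δ w) := h.contDiff_delta.continuous.comp (.prodMk_right w)
      exact (tendsto_const_nhds.div ((hΔ.tendsto z₀).pow 2) (pow_ne_zero 2 hne)).mono_left
        nhdsWithin_le_nhds

lemma exists_tendsto_setIntegral_div_sq_of_eq_zero (h : IsLerayDenominator ρ Δ)
    (hV : finrank ℝ V = d + 1) (hd : 2 ≤ d) (hf : ContDiff ℝ 1 f) (hz₀ : ρ z₀ = 0) :
    ∃ l, Tendsto (fun z => ∫ w in {w | ρ w = 0}, f w / Δ w z ^ 2 ∂μH[d])
      (𝓝[{z | ρ z < 0}] z₀) (𝓝 l) := by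
  obtain ⟨κ⟩ := h.nonempty_boundaryChart hV hd hz₀
  obtain ⟨δ, hδ, hnear⟩ := κ.exists_forall_tendsto_setIntegral_div_sq h
  let β : ContDiffBump z₀ := ⟨δ / 2, δ, half_pos hδ, half_lt_self hδ⟩
  have hβf : ContDiff ℝ 1 fun w => β w • f w := β.contDiff.smul hf
  have hβf' : ContDiff ℝ 1 fun w => (1 - β w) • f w := (contDiff_const.sub β.contDiff).smul hf
  obtain ⟨l, hl⟩ := hnear _ hβf fun w hw => by
    rw [β.zero_of_le_dist (not_lt.1 hw), zero_smul]
  have hfar := h.tendsto_setIntegral_div_sq hV hd hβf'.continuous hz₀.le (by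
    filter_upwards [β.eventuallyEq_one] with w hw _
    rw [hw, Pi.one_apply, sub_self, zero_smul])
  refine ⟨_, (hl.add hfar).congr' ?_⟩
  filter_upwards [self_mem_nhdsWithin] with z hz
  rw [← integral_add (h.integrableOn_div_sq hV hd hβf.continuous hz)
    (h.integrableOn_div_sq hV hd hβf'.continuous hz)]
  refine integral_congr_ae (.of_forall fun w => ?_)
  simp only [← add_div, ← add_smul, add_sub_cancel, one_smul]

end IsLerayDenominator

theorem stmt0_general (h : IsLerayDenominator ρ Δ) (hV : finrank ℝ V = d + 1) (hd : 2 ≤ d)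
    {f : V → ℂ} (hf : ContDiff ℝ 1 f) :
    (∀ z ∈ {z | ρ z < 0}, IntegrableOn (fun w => f w / Δ w z ^ 2) {w | ρ w = 0} μH[d]) ∧
    ∃ G : V → ℂ, ContinuousOn G (closure {z | ρ z < 0}) ∧
      ∀ z ∈ {z | ρ z < 0}, G z = ∫ w in {w | ρ w = 0}, f w / Δ w z ^ 2 ∂μH[d] := by
  let F : V → ℂ := fun z => ∫ w in {w | ρ w = 0}, f w / Δ w z ^ 2 ∂μH[d]
  have hinterior : ∀ z ∈ {z | ρ z < 0}, Tendsto F (𝓝[{z | ρ z < 0}] z) (𝓝 (F z)) := fun z hz =>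
    h.tendsto_setIntegral_div_sq hV hd hf.continuous (le_of_lt hz)
      (h.eventually_eq_zero_imp_of_neg hz)
  refine ⟨fun z => h.integrableOn_div_sq hV hd hf.continuous,
    extendFrom {z | ρ z < 0} F, continuousOn_extendFrom subset_rfl fun z hz => ?_,
    fun z hz => extendFrom_eq (subset_closure hz) (hinterior z hz)⟩
  have hle : ρ z ≤ 0 := closure_lt_subset_le h.contDiff_rho.continuous continuous_const hz
  rcases hle.lt_or_eq with hneg | hzero
  · exact ⟨_, hinterior z hneg⟩
  · exact h.exists_tendsto_setIntegral_div_sq_of_eq_zero hV hd hf hzero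

end BoundaryChart

section CauchyLeray

/-- The `i`-th coordinate of `ℂ²` as a real-linear map. -/
def coord (i : Fin 2) : C2 →L[ℝ] ℂ :=
  (EuclideanSpace.proj (𝕜 := ℂ) i : C2 →L[ℂ] ℂ).restrictScalars ℝ

@[simp] lemma coord_apply (i : Fin 2) (w : C2) : coord i w = w i := rfl

/-- The coefficient `∂ρ/∂w₁` of the complex differential `∂ρ`; the other one is `conj w₂`. -/
def delRhoCoeff (w : C2) : ℂ := (w 0).re - 2 * I * (w 0).im ^ 3

lemma delRhoCoeff_re (w : C2) : (delRhoCoeff w).re = (w 0).re := by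
  simp [delRhoCoeff, ← ofReal_pow]

lemma delRhoCoeff_im (w : C2) : (delRhoCoeff w).im = -2 * (w 0).im ^ 3 := by
  simp [delRhoCoeff, ← ofReal_pow]

/-- The complex differential `∂ρ(w)`. -/
def delRho (w : C2) : C2 →L[ℝ] ℂ :=
  delRhoCoeff w • coord 0 + starRingEnd ℂ (w 1) • coord 1

lemma delRho_apply_re (w v : C2) :
    (delRho w v).re = (w 0).re * (v 0).re + 2 * (w 0).im ^ 3 * (v 0).im
      + ((w 1).re * (v 1).re + (w 1).im * (v 1).im) := by
  simp [delRho, delRhoCoeff_re, delRhoCoeff_im]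

lemma contDiff_delRhoCoeff {n : WithTop ℕ∞} : ContDiff ℝ n delRhoCoeff := by
  have hre : ContDiff ℝ n fun w : C2 => ((w 0).re : ℂ) := (ofRealCLM ∘L reCLM ∘L coord 0).contDiff
  have him : ContDiff ℝ n fun w : C2 => ((w 0).im : ℂ) := (ofRealCLM ∘L imCLM ∘L coord 0).contDiff
  exact hre.sub (contDiff_const.mul (him.pow 3))

lemma contDiff_rho {n : WithTop ℕ∞} : ContDiff ℝ n rho :=
  ((((coord 1).contDiff.norm_sq ℝ).add ((reCLM ∘L coord 0).contDiff.pow 2)).add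
    ((imCLM ∘L coord 0).contDiff.pow 4)).sub contDiff_const

lemma contDiff_Delta {n : WithTop ℕ∞} : ContDiff ℝ n (uncurry Delta) := by
  have hsub (i : Fin 2) : ContDiff ℝ n fun p : C2 × C2 => p.1 i - p.2 i :=
    ((coord i).contDiff.comp contDiff_fst).sub ((coord i).contDiff.comp contDiff_snd)
  have hconj : ContDiff ℝ n fun w : C2 => starRingEnd ℂ (w 1) :=
    conjCLE.contDiff.comp (coord 1).contDiff
  exact ((contDiff_delRhoCoeff.comp contDiff_fst).mul (hsub 0)).add
    ((hconj.comp contDiff_fst).mul (hsub 1))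

lemma hasFDerivAt_rho (w : C2) : HasFDerivAt rho ((2 : ℝ) • reCLM ∘L delRho w) w := by
  have hderiv : HasFDerivAt rho _ w := (((coord 1).hasFDerivAt.norm_sq.add
    ((reCLM ∘L coord 0).hasFDerivAt.pow 2)).add ((imCLM ∘L coord 0).hasFDerivAt.pow 4)).sub_const 1
  refine hderiv.congr_fderiv ?_
  ext v
  trans 2 * (delRho w v).re
  · rw [delRho_apply_re]
    simp only [Fin.isValue, coord_apply, ContinuousLinearMap.comp_apply, reCLM_apply, imCLM_apply,
      add_apply, smul_apply, coe_innerSL_apply, nsmul_eq_mul, smul_eq_mul, Nat.cast_ofNat,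
      Nat.add_one_sub_one, pow_one, Complex.inner, mul_re, conj_re, conj_im]
    ring
  · simp

lemma hasFDerivAt_Delta_left (w : C2) : HasFDerivAt (fun w' => Delta w' w) (delRho w) w := by
  have hcoeff := (contDiff_delRhoCoeff (n := 1).differentiable one_ne_zero w).hasFDerivAt
  have hconj := ((conjCLE : ℂ →L[ℝ] ℂ) ∘L coord 1).hasFDerivAt (x := w)
  have hsub (i : Fin 2) := ((coord i).hasFDerivAt (x := w)).sub_const (w i)
  have hderiv : HasFDerivAt (fun w' => Delta w' w) _ w :=
    (hcoeff.mul (hsub 0)).add (hconj.mul (hsub 1))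
  refine hderiv.congr_fderiv ?_
  ext v
  simp [delRho]

lemma delRhoCoeff_ne_zero {w : C2} (hw : rho w = 0) (h1 : w 1 = 0) : delRhoCoeff w ≠ 0 := by
  intro h0
  have hre : (w 0).re = 0 := by rw [← delRhoCoeff_re, h0, zero_re]
  have him : (w 0).im = 0 := by simpa [h0] using delRhoCoeff_im w
  norm_num [rho, h1, hre, him] at hw

lemma delRho_surjective {w : C2} (hw : rho w = 0) : Surjective (delRho w) := fun ζ => by
  by_cases h1 : w 1 = 0
  · refine ⟨EuclideanSpace.single 0 (ζ / delRhoCoeff w), ?_⟩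
    simp [delRho, mul_div_cancel₀ ζ (delRhoCoeff_ne_zero hw h1)]
  · have hconj : starRingEnd ℂ (w 1) ≠ 0 := by simpa using h1
    refine ⟨EuclideanSpace.single 1 (ζ / starRingEnd ℂ (w 1)), ?_⟩
    simp [delRho, mul_div_cancel₀ ζ hconj]

lemma two_mul_re_Delta (w z : C2) :
    2 * (Delta w z).re = rho w - rho z + ‖w 1 - z 1‖ ^ 2 + ((w 0).re - (z 0).re) ^ 2
      + ((w 0).im - (z 0).im) ^ 2 * (((w 0).im + (z 0).im) ^ 2 + 2 * (w 0).im ^ 2) := by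
  rw [show Delta w z = delRho w (w - z) from rfl, delRho_apply_re]
  simp only [rho, ← normSq_eq_norm_sq, normSq_apply, PiLp.sub_apply, sub_re, sub_im]
  ring

lemma norm_sq_eq_C2 (v : C2) : ‖v‖ ^ 2 = ‖v 1‖ ^ 2 + (v 0).re ^ 2 + (v 0).im ^ 2 := by
  rw [EuclideanSpace.norm_sq_eq, Fin.sum_univ_two, ← normSq_eq_norm_sq (v 0), normSq_apply]
  ring

lemma sq_le_one_of_rho_nonpos {z : C2} (hz : rho z ≤ 0) :
    ‖z 1‖ ^ 2 ≤ 1 ∧ (z 0).re ^ 2 ≤ 1 ∧ (z 0).im ^ 2 ≤ 1 := by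
  have hsum : ‖z 1‖ ^ 2 + (z 0).re ^ 2 + ((z 0).im ^ 2) ^ 2 ≤ 1 := by
    rw [← pow_mul]
    exact sub_nonpos.1 hz
  refine ⟨?_, ?_, abs_le_of_sq_le_sq' ?_ zero_le_one |>.2⟩ <;>
    linarith [sq_nonneg ‖z 1‖, sq_nonneg (z 0).re, sq_nonneg ((z 0).im ^ 2)]

lemma norm_sub_pow_four_le {w z : C2} (hw : rho w = 0) (hz : rho z ≤ 0) :
    ‖w - z‖ ^ 4 ≤ 24 * ‖Delta w z‖ := by
  obtain ⟨hw1, hwre, -⟩ := sq_le_one_of_rho_nonpos hw.le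
  obtain ⟨hz1, hzre, -⟩ := sq_le_one_of_rho_nonpos hz
  have hnorm := norm_sq_eq_C2 (w - z)
  simp only [PiLp.sub_apply, sub_re, sub_im] at hnorm
  have hRe := two_mul_re_Delta w z
  have hs4 : ‖w 1 - z 1‖ ^ 2 ≤ 4 := by
    have := norm_sub_le (w 1) (z 1)
    nlinarith [norm_nonneg (w 1 - z 1), sq_nonneg (‖w 1‖ - ‖z 1‖)]
  have hp4 : ((w 0).re - (z 0).re) ^ 2 ≤ 4 := by nlinarith [sq_nonneg ((w 0).re + (z 0).re)]
  have hquartic : ((w 0).im - (z 0).im) ^ 2 / 3 ≤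
      ((w 0).im + (z 0).im) ^ 2 + 2 * (w 0).im ^ 2 := by
    nlinarith [sq_nonneg (2 * (w 0).im + (z 0).im)]
  set s := ‖w 1 - z 1‖
  set p := (w 0).re - (z 0).re
  set q := (w 0).im - (z 0).im
  calc ‖w - z‖ ^ 4 = (s ^ 2 + p ^ 2 + q ^ 2) ^ 2 := by rw [← hnorm]; ring
    _ ≤ 3 * (s ^ 2 * s ^ 2 + p ^ 2 * p ^ 2 + q ^ 2 * q ^ 2) := by
        nlinarith [sq_nonneg (s ^ 2 - p ^ 2), sq_nonneg (p ^ 2 - q ^ 2), sq_nonneg (s ^ 2 - q ^ 2)]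
    _ ≤ 3 * (4 * s ^ 2 + 4 * p ^ 2 + q ^ 2 * q ^ 2) := by gcongr
    _ ≤ 12 * (s ^ 2 + p ^ 2 + q ^ 2 * (q ^ 2 / 3)) := by nlinarith [sq_nonneg (q ^ 2)]
    _ ≤ 12 * (2 * (Delta w z).re) := by
        rw [hRe, hw]
        have := mul_le_mul_of_nonneg_left hquartic (sq_nonneg q)
        linarith
    _ ≤ 24 * ‖Delta w z‖ := by linarith [re_le_norm (Delta w z)]

lemma isCompact_rho_eq_zero : IsCompact {w | rho w = 0} := by
  refine Metric.isCompact_of_isClosed_isBounded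
    (isClosed_eq (contDiff_rho (n := 0)).continuous continuous_const)
    (Metric.isBounded_closedBall.subset fun w hw => mem_closedBall_zero_iff.2
      (abs_le_of_sq_le_sq' (b := 2) ?_ zero_le_two).2)
  obtain ⟨h1, hre, him⟩ := sq_le_one_of_rho_nonpos (le_of_eq hw)
  linarith [norm_sq_eq_C2 w]

theorem isLerayDenominator_Delta : IsLerayDenominator rho Delta where
  contDiff_rho := contDiff_rho
  contDiff_delta := contDiff_Delta
  isCompact_zeroSet := isCompact_rho_eq_zero
  exists_hasFDerivAt w hw :=
    ⟨delRho w, delRho_surjective hw, hasFDerivAt_rho w, hasFDerivAt_Delta_left w⟩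
  exists_mul_pow_le_norm := ⟨24⁻¹, by norm_num, 4, fun w z hw hz =>
    (inv_mul_le_iff₀ (by norm_num)).2 (norm_sub_pow_four_le hw hz)⟩

lemma finrank_real_C2 : finrank ℝ C2 = 4 := by
  rw [← finrank_mul_finrank ℝ ℂ C2, Complex.finrank_real_complex, finrank_euclideanSpace_fin]

end CauchyLeray

/-- For `f` the restriction to `bD` of a `C¹` function on `ℂ²`, the function
`F(z) = ∫_{bD} f(w)·Δ(w,z)⁻² dH³(w)` is given by an absolutely convergent integral
for every `z ∈ D`, and it extends to a continuous function on the closure of `D`. -/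
theorem stmt0 (f : C2 → ℂ) (hf : ContDiff ℝ 1 f) :
    (∀ z ∈ D, IntegrableOn (fun w => f w / (Delta w z) ^ 2) bD μH[3]) ∧
    ∃ G : C2 → ℂ, ContinuousOn G (closure D) ∧
      ∀ z ∈ D, G z = ∫ w in bD, f w / (Delta w z) ^ 2 ∂μH[3] := by
  exact_mod_cast stmt0_general (d := 3) isLerayDenominator_Delta finrank_real_C2 (by norm_num) hf

end
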